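/- arXiv:2305.19766 — 5 statements merged into one kernel-verified Lean document; each statement's English description precedes it below -/
import Mathlib

section
/- Let (A_0, A_1) be a two-outcome POVM on ℂ^d and let U ∈ U(2d) be a unitary whose blocks satisfy U_{00}* U_{00} = A_0 and U_{10}* U_{10} = A_1. Then there exist unitary matrices V, W, Z ∈ U(d) such that U_{00} = V√A_0, U_{10} = W√A_1, U_{01} = V√A_1 Z*, and U_{11} = −W√A_0 Z*. -/
open scoped Kronecker
open Matrix
open scoped ComplexOrder
open scoped MatrixOrder

/-- The `(i,j)` block (of size `d × d`) of a matrix on `ℂ^d ⊗ ℂ^n`. -/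
def blk {d n : ℕ} (U : Matrix (Fin d × Fin n) (Fin d × Fin n) ℂ) (i j : Fin n) :
    Matrix (Fin d) (Fin d) ℂ :=
  Matrix.of fun a b => U (a, i) (b, j)

/-- Operators with the same Gram operator differ by an isometry on the left. -/
theorem exists_isometry_of_gram_eq {H : Type*} [NormedAddCommGroup H] [InnerProductSpace ℂ H]
    [FiniteDimensional ℂ H] [CompleteSpace H] (X Y : H →L[ℂ] H)
    (h : star X * X = star Y * Y) : ∃ e : H →L[ℂ] H, star e * e = 1 ∧ X = e * Y := by
  have hnorm : ∀ v, ‖X v‖ = ‖Y v‖ := by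
    intro v
    have h1 : inner ℂ v ((star X * X) v) = inner ℂ v ((star Y * Y) v) := by rw [h]
    change inner ℂ v (ContinuousLinearMap.adjoint X (X v)) =
      inner ℂ v (ContinuousLinearMap.adjoint Y (Y v)) at h1
    rw [ContinuousLinearMap.adjoint_inner_right, ContinuousLinearMap.adjoint_inner_right] at h1
    rw [@norm_eq_sqrt_re_inner ℂ, h1, ← @norm_eq_sqrt_re_inner ℂ]
  obtain ⟨x, hx⟩ : ∃ x : H →ₗ[ℂ] H, ∀ v, x v = X v := ⟨X.toLinearMap, fun _ => rfl⟩
  obtain ⟨y, hy⟩ : ∃ y : H →ₗ[ℂ] H, ∀ v, y v = Y v := ⟨Y.toLinearMap, fun _ => rfl⟩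
  have hxy : ∀ v, ‖x v‖ = ‖y v‖ := fun v => by rw [hx, hy, hnorm]
  obtain ⟨g, hg⟩ := y.rangeRestrict.exists_rightInverse_of_surjective y.range_rangeRestrict
  have hg' : ∀ s : LinearMap.range y, y (g s) = s := fun s =>
    congrArg Subtype.val (LinearMap.congr_fun hg s)
  let L : LinearMap.range y →ₗᵢ[ℂ] H :=
    { toLinearMap := x ∘ₗ g
      norm_map' := fun s => by
        change ‖x (g s)‖ = ‖s‖
        rw [hxy, hg' s]
        rfl }
  have hE : ∀ v, L.extend (y v) = x v := by
    intro v
    have h1 : L.extend (y v) = x (g (y.rangeRestrict v)) := L.extend_apply (y.rangeRestrict v)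
    rw [h1, ← sub_eq_zero, ← map_sub, ← norm_eq_zero, hxy, map_sub, hg']
    simp
  refine ⟨L.extend.toContinuousLinearMap, ?_, ?_⟩
  · exact (ContinuousLinearMap.norm_map_iff_adjoint_comp_self _).1 L.extend.norm_map
  · ext1 v
    rw [← hx, ← hE, hy]
    rfl

/-- Matrices with the same Gram matrix differ by a unitary on the left. -/
theorem exists_unitary_of_gram_eq {d : ℕ} (X Y : Matrix (Fin d) (Fin d) ℂ)
    (h : Xᴴ * X = Yᴴ * Y) : ∃ V ∈ Matrix.unitaryGroup (Fin d) ℂ, X = V * Y := by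
  obtain ⟨T, -⟩ : ∃ T : Matrix (Fin d) (Fin d) ℂ ≃⋆ₐ[ℂ]
    (EuclideanSpace ℂ (Fin d) →L[ℂ] EuclideanSpace ℂ (Fin d)), True :=
    ⟨Matrix.toEuclideanCLM (n := Fin d) (𝕜 := ℂ), trivial⟩
  have hT : star (T X) * T X = star (T Y) * T Y := by
    rw [← map_star, ← map_star, ← map_mul, ← map_mul]
    exact congrArg T h
  obtain ⟨e, he, hXY⟩ := exists_isometry_of_gram_eq _ _ hT
  refine ⟨T.symm e, ?_, ?_⟩
  · rw [Matrix.mem_unitaryGroup_iff']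
    apply EquivLike.injective T
    rw [map_mul, map_star, T.apply_symm_apply, map_one]
    exact he
  · apply EquivLike.injective T
    rw [map_mul, T.apply_symm_apply]
    exact hXY

/-- if a unitary `U ∈ U(2d)` has blocks satisfying `U₀₀* U₀₀ = A₀` and
`U₁₀* U₁₀ = A₁` for a two-outcome POVM `(A₀, A₁)`, then there exist unitaries
`V, W, Z ∈ U(d)` with `U₀₀ = V√A₀`, `U₁₀ = W√A₁`, `U₀₁ = V√A₁Z*`, `U₁₁ = -W√A₀Z*`. -/
theorem stmt_2 {d : ℕ} (hd : 1 ≤ d)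
    (A₀ A₁ : Matrix (Fin d) (Fin d) ℂ)
    (hA₀ : A₀.PosSemidef) (hA₁ : A₁.PosSemidef) (hsum : A₀ + A₁ = 1)
    (U : Matrix (Fin d × Fin 2) (Fin d × Fin 2) ℂ)
    (hU : U ∈ Matrix.unitaryGroup (Fin d × Fin 2) ℂ)
    (h00 : (blk U 0 0)ᴴ * blk U 0 0 = A₀)
    (h10 : (blk U 1 0)ᴴ * blk U 1 0 = A₁) :
    ∃ V W Z : Matrix (Fin d) (Fin d) ℂ,
      V ∈ Matrix.unitaryGroup (Fin d) ℂ ∧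
      W ∈ Matrix.unitaryGroup (Fin d) ℂ ∧
      Z ∈ Matrix.unitaryGroup (Fin d) ℂ ∧
      blk U 0 0 = V * CFC.sqrt A₀ ∧
      blk U 1 0 = W * CFC.sqrt A₁ ∧
      blk U 0 1 = V * CFC.sqrt A₁ * Zᴴ ∧
      blk U 1 1 = -(W * CFC.sqrt A₀ * Zᴴ) := by
  set a := blk U 0 0 with ha
  set b := blk U 0 1 with hb
  set c := blk U 1 0 with hc
  set e := blk U 1 1 with he
  have hU1 := Matrix.mem_unitaryGroup_iff.1 hU
  have hU2 := Matrix.mem_unitaryGroup_iff'.1 hU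
  have r1 : a * aᴴ + b * bᴴ = 1 := by
    ext i j
    have := congrFun (congrFun hU1 (i, 0)) (j, 0)
    simpa [Matrix.mul_apply, Fintype.sum_prod_type, Fin.sum_univ_two, Finset.sum_add_distrib,
      Matrix.one_apply, a, b, blk] using this
  have r2 : a * cᴴ + b * eᴴ = 0 := by
    ext i j
    have := congrFun (congrFun hU1 (i, 0)) (j, 1)
    simpa [Matrix.mul_apply, Fintype.sum_prod_type, Fin.sum_univ_two, Finset.sum_add_distrib,
      Matrix.one_apply, a, b, c, e, blk] using this
  have r3 : c * cᴴ + e * eᴴ = 1 := by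
    ext i j
    have := congrFun (congrFun hU1 (i, 1)) (j, 1)
    simpa [Matrix.mul_apply, Fintype.sum_prod_type, Fin.sum_univ_two, Finset.sum_add_distrib,
      Matrix.one_apply, c, e, blk] using this
  have r4 : bᴴ * b + eᴴ * e = 1 := by
    ext i j
    have := congrFun (congrFun hU2 (i, 1)) (j, 1)
    simpa [Matrix.mul_apply, Fintype.sum_prod_type, Fin.sum_univ_two, Finset.sum_add_distrib,
      Matrix.one_apply, b, e, blk] using this
  have r5 : c * aᴴ + e * bᴴ = 0 := by
    have := congrArg Matrix.conjTranspose r2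
    simpa using this
  clear_value a b c e
  have hs0 : CFC.sqrt A₀ * CFC.sqrt A₀ = A₀ := CFC.sqrt_mul_sqrt_self A₀ hA₀.nonneg
  have hs1 : CFC.sqrt A₁ * CFC.sqrt A₁ = A₁ := CFC.sqrt_mul_sqrt_self A₁ hA₁.nonneg
  have hh0 : (CFC.sqrt A₀)ᴴ = CFC.sqrt A₀ :=
    (Matrix.nonneg_iff_posSemidef.1 (CFC.sqrt_nonneg A₀)).isHermitian
  have hh1 : (CFC.sqrt A₁)ᴴ = CFC.sqrt A₁ :=
    (Matrix.nonneg_iff_posSemidef.1 (CFC.sqrt_nonneg A₁)).isHermitian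
  have hcomm : Commute (CFC.sqrt A₀) (CFC.sqrt A₁) := by
    have h1 : Commute A₀ A₁ := by
      have : A₁ = 1 - A₀ := by rw [← hsum]; abel
      rw [this]
      exact (Commute.one_right _).sub_right (Commute.refl _)
    have h2 : Commute (CFC.sqrt A₀) A₁ := by
      rw [CFC.sqrt_eq_cfc]
      exact h1.cfc_nnreal _
    rw [CFC.sqrt_eq_cfc (a := A₁)]
    exact (h2.symm.cfc_nnreal _).symm
  set S := CFC.sqrt A₀
  set R := CFC.sqrt A₁
  clear_value S R
  obtain ⟨V, hV, haV⟩ := exists_unitary_of_gram_eq a S (by rw [h00, hh0, hs0])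
  obtain ⟨W, hW, hcW⟩ := exists_unitary_of_gram_eq c R (by rw [h10, hh1, hs1])
  have hV1 : V * Vᴴ = 1 := Matrix.mem_unitaryGroup_iff.1 hV
  have hW1 : W * Wᴴ = 1 := Matrix.mem_unitaryGroup_iff.1 hW
  have haH : aᴴ = S * Vᴴ := by rw [haV, Matrix.conjTranspose_mul, hh0]
  have hcH : cᴴ = R * Wᴴ := by rw [hcW, Matrix.conjTranspose_mul, hh1]
  have hRR : R * R = 1 - S * S := by rw [hs0, hs1, ← hsum]; abel
  have k1 : V * R * (R * Vᴴ) = b * bᴴ := by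
    calc V * R * (R * Vᴴ) = V * (R * R) * Vᴴ := by noncomm_ring
      _ = V * Vᴴ - (V * S) * (S * Vᴴ) := by rw [hRR]; noncomm_ring
      _ = b * bᴴ := by rw [hV1, ← haH, ← haV, ← r1]; abel
  have k2 : W * S * (S * Wᴴ) = e * eᴴ := by
    calc W * S * (S * Wᴴ) = W * (1 - R * R) * Wᴴ := by rw [hRR]; noncomm_ring
      _ = W * Wᴴ - (W * R) * (R * Wᴴ) := by noncomm_ring
      _ = e * eᴴ := by rw [hW1, ← hcH, ← hcW, ← r3]; abel
  have k3 : V * R * (S * Wᴴ) = -(b * eᴴ) := by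
    calc V * R * (S * Wᴴ) = V * (R * S) * Wᴴ := by noncomm_ring
      _ = (V * S) * (R * Wᴴ) := by rw [← hcomm.eq]; noncomm_ring
      _ = -(b * eᴴ) := by rw [← hcH, ← haV]; exact eq_neg_of_add_eq_zero_left r2
  have k4 : W * S * (R * Vᴴ) = -(e * bᴴ) := by
    calc W * S * (R * Vᴴ) = W * (S * R) * Vᴴ := by noncomm_ring
      _ = (W * R) * (S * Vᴴ) := by rw [hcomm.eq]; noncomm_ring
      _ = -(e * bᴴ) := by rw [← haH, ← hcW]; exact eq_neg_of_add_eq_zero_left r5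
  obtain ⟨Y, hY⟩ : ∃ Y, Y = R * Vᴴ * b - S * Wᴴ * e := ⟨_, rfl⟩
  have hb' : V * R * Y = b := by
    calc V * R * Y = (V * R * (R * Vᴴ)) * b - (V * R * (S * Wᴴ)) * e := by
          rw [hY]; noncomm_ring
      _ = b * (bᴴ * b + eᴴ * e) := by rw [k1, k3]; noncomm_ring
      _ = b := by rw [r4, mul_one]
  have he' : W * S * Y = -e := by
    calc W * S * Y = (W * S * (R * Vᴴ)) * b - (W * S * (S * Wᴴ)) * e := by
          rw [hY]; noncomm_ring
      _ = -(e * (bᴴ * b + eᴴ * e)) := by rw [k2, k4]; noncomm_ring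
      _ = -e := by rw [r4, mul_one]
  have hYH : Yᴴ = bᴴ * (V * R) - eᴴ * (W * S) := by
    rw [hY]
    simp [Matrix.conjTranspose_mul, hh0, hh1]
  have hYY : Yᴴ * Y = 1 := by
    calc Yᴴ * Y = bᴴ * (V * R * Y) - eᴴ * (W * S * Y) := by rw [hYH]; noncomm_ring
      _ = 1 := by rw [hb', he', ← r4]; noncomm_ring
  refine ⟨V, W, Yᴴ, hV, hW, ?_, haV, hcW, ?_, ?_⟩
  · rw [Matrix.mem_unitaryGroup_iff, Matrix.star_eq_conjTranspose, Matrix.conjTranspose_conjTranspose]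
    exact hYY
  · rw [Matrix.conjTranspose_conjTranspose, hb']
  · rw [Matrix.conjTranspose_conjTranspose, he', neg_neg]
end

section
/- Let (A_0, A_1) be a two-outcome POVM on ℂ^d, let V, W, Z ∈ U(d), and let U ∈ U(2d) be the unitary with blocks U_{00} = V√A_0, U_{01} = V√A_1 Z*, U_{10} = W√A_1, U_{11} = −W√A_0 Z*. Let β ∈ M_2(ℂ) be a density matrix with entries β_{ij}, and ρ ∈ M_d(ℂ) a density matrix. Then for i ∈ {0,1}, Tr[ U (ρ ⊗ β) U* (I_d ⊗ |i⟩⟨i|) ] = Tr[A_i^β ρ], where A_0^β := β_{00} A_0 + β_{01} Z √A_1 √A_0 + β_{10} √A_1 √A_0 Z* + β_{11} Z A_1 Z* and A_1^β := β_{00} A_1 − β_{01} Z √A_1 √A_0 − β_{10} √A_1 √A_0 Z* + β_{11} Z A_0 Z*. Moreover (A_0^β, A_1^β) is a two-outcome POVM. -/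
open scoped Kronecker
open Matrix
open scoped ComplexOrder

/-- The positive semidefinite square root of a positive semidefinite matrix
(Mathlib's former `Matrix.PosSemidef.sqrt`). -/
noncomputable def Matrix.PosSemidef.sqrt {n 𝕜 : Type*} [Fintype n] [RCLike 𝕜] [DecidableEq n]
    {A : Matrix n n 𝕜} (hA : A.PosSemidef) : Matrix n n 𝕜 :=
  hA.1.eigenvectorUnitary.1 * diagonal ((↑) ∘ Real.sqrt ∘ hA.1.eigenvalues) *
    (star hA.1.eigenvectorUnitary : Matrix n n 𝕜)

theorem sqrt_eq_cfc_aux {n : Type*} [Fintype n] [DecidableEq n] {A : Matrix n n ℂ}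
    (hA : A.PosSemidef) : hA.sqrt = cfc Real.sqrt A := by
  rw [hA.1.cfc_eq]
  rfl

theorem sqrt_herm_aux {n : Type*} [Fintype n] [DecidableEq n] {A : Matrix n n ℂ}
    (hA : A.PosSemidef) : hA.sqrtᴴ = hA.sqrt := by
  rw [sqrt_eq_cfc_aux]
  exact (cfc_predicate Real.sqrt A : IsSelfAdjoint _)

theorem sqrt_mul_self_aux {n : Type*} [Fintype n] [DecidableEq n] {A : Matrix n n ℂ}
    (hA : A.PosSemidef) : hA.sqrt * hA.sqrt = A := by
  have h := hA.1.spectral_theorem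
  rw [Unitary.conjStarAlgAut_apply] at h
  conv_rhs => rw [h]
  have hu : (star hA.1.eigenvectorUnitary : Matrix n n ℂ) * hA.1.eigenvectorUnitary.1 = 1 :=
    Unitary.star_mul_self_of_mem hA.1.eigenvectorUnitary.2
  have hd : diagonal (((↑) : ℝ → ℂ) ∘ Real.sqrt ∘ hA.1.eigenvalues) *
      diagonal (((↑) : ℝ → ℂ) ∘ Real.sqrt ∘ hA.1.eigenvalues)
      = diagonal (((↑) : ℝ → ℂ) ∘ hA.1.eigenvalues) := by
    rw [diagonal_mul_diagonal]
    congr 1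
    ext i
    simp only [Function.comp_apply]
    rw [← Complex.ofReal_mul, Real.mul_self_sqrt (hA.eigenvalues_nonneg i)]
  calc hA.sqrt * hA.sqrt = hA.1.eigenvectorUnitary.1 *
        (diagonal (((↑) : ℝ → ℂ) ∘ Real.sqrt ∘ hA.1.eigenvalues) *
        ((star hA.1.eigenvectorUnitary : Matrix n n ℂ) * hA.1.eigenvectorUnitary.1) *
      diagonal (((↑) : ℝ → ℂ) ∘ Real.sqrt ∘ hA.1.eigenvalues)) *
        (star hA.1.eigenvectorUnitary : Matrix n n ℂ) := by
          have hs : hA.sqrt = hA.1.eigenvectorUnitary.1 *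
              diagonal (((↑) : ℝ → ℂ) ∘ Real.sqrt ∘ hA.1.eigenvalues) *
              (star hA.1.eigenvectorUnitary : Matrix n n ℂ) := rfl
          rw [hs]
          simp only [Matrix.mul_assoc]
    _ = _ := by rw [hu, Matrix.mul_one, hd]; rfl

theorem psd_aux {d : ℕ} (K L : Matrix (Fin d) (Fin d) ℂ)
    (β : Matrix (Fin 2) (Fin 2) ℂ) (hβ : β.PosSemidef) :
    (β 0 0 • (Kᴴ * K) + β 0 1 • (Lᴴ * K) + β 1 0 • (Kᴴ * L) + β 1 1 • (Lᴴ * L)).PosSemidef := by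
  obtain ⟨B, hB⟩ : ∃ B : Matrix (Fin 2) (Fin 2) ℂ, β = Bᴴ * B :=
    ⟨hβ.sqrt, by rw [sqrt_herm_aux, sqrt_mul_self_aux]⟩
  have h : ∀ m, ((star (B m 0) • K + star (B m 1) • L)ᴴ *
      (star (B m 0) • K + star (B m 1) • L)).PosSemidef :=
    fun m => posSemidef_conjTranspose_mul_self _
  convert (h 0).add (h 1) using 1
  subst hB
  simp only [Matrix.mul_apply, Fin.sum_univ_two, conjTranspose_apply, conjTranspose_add,
    conjTranspose_smul, star_star, Matrix.add_mul, Matrix.mul_add, Matrix.smul_mul,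
    Matrix.mul_smul, smul_add, smul_smul, add_smul]
  simp only [mul_comm]
  abel

theorem tr_aux {d : ℕ} (a b c e ρ : Matrix (Fin d) (Fin d) ℂ)
    (β : Matrix (Fin 2) (Fin 2) ℂ) (i : Fin 2) (K L : Matrix (Fin d) (Fin d) ℂ)
    (hK : K = if i = 0 then a else c) (hL : L = if i = 0 then b else e) :
    Matrix.trace ((a ⊗ₖ Matrix.single (0 : Fin 2) (0 : Fin 2) (1 : ℂ)
            + b ⊗ₖ Matrix.single (0 : Fin 2) (1 : Fin 2) (1 : ℂ)
            + c ⊗ₖ Matrix.single (1 : Fin 2) (0 : Fin 2) (1 : ℂ)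
            + e ⊗ₖ Matrix.single (1 : Fin 2) (1 : Fin 2) (1 : ℂ)) * (ρ ⊗ₖ β) *
        (a ⊗ₖ Matrix.single (0 : Fin 2) (0 : Fin 2) (1 : ℂ)
            + b ⊗ₖ Matrix.single (0 : Fin 2) (1 : Fin 2) (1 : ℂ)
            + c ⊗ₖ Matrix.single (1 : Fin 2) (0 : Fin 2) (1 : ℂ)
            + e ⊗ₖ Matrix.single (1 : Fin 2) (1 : Fin 2) (1 : ℂ))ᴴ *
        ((1 : Matrix (Fin d) (Fin d) ℂ) ⊗ₖ Matrix.single i i (1 : ℂ))) =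
    Matrix.trace ((β 0 0 • (Kᴴ * K) + β 0 1 • (Lᴴ * K) + β 1 0 • (Kᴴ * L)
      + β 1 1 • (Lᴴ * L)) * ρ) := by
  have cyc : ∀ X Y : Matrix (Fin d) (Fin d) ℂ,
      trace (Xᴴ * Y * ρ) = trace (Y * ρ * Xᴴ) := fun X Y => by
    rw [Matrix.mul_assoc, Matrix.trace_mul_comm]
  have key : ∀ p q r s : Fin 2, trace (single p q (1:ℂ) * β * single r s (1:ℂ) * single i i (1:ℂ))
      = if s = i ∧ p = i then β q r else 0 := by
    intro p q r s
    fin_cases p <;> fin_cases q <;> fin_cases r <;> fin_cases s <;> fin_cases i <;>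
      simp [trace, Matrix.mul_apply, Fin.sum_univ_two, single_apply]
  simp only [conjTranspose_add, conjTranspose_kronecker, conjTranspose_single, star_one,
    Matrix.add_mul, Matrix.mul_add, ← mul_kronecker_mul, trace_add, trace_kronecker,
    Matrix.mul_one, key, Matrix.smul_mul, trace_smul, cyc, smul_eq_mul]
  subst hK hL
  fin_cases i <;> simp <;> ring

/-- the effective POVM induced by an imperfect indirect measurement with a
general two-level probe `β` and interaction unitary with blocks `V√A₀, V√A₁Z*, W√A₁, -W√A₀Z*`. -/
theorem stmt_4 {d : ℕ} (hd : 1 ≤ d)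
    (A₀ A₁ : Matrix (Fin d) (Fin d) ℂ)
    (hA₀ : A₀.PosSemidef) (hA₁ : A₁.PosSemidef) (hsum : A₀ + A₁ = 1)
    (V W Z : Matrix (Fin d) (Fin d) ℂ)
    (hV : V ∈ Matrix.unitaryGroup (Fin d) ℂ)
    (hW : W ∈ Matrix.unitaryGroup (Fin d) ℂ)
    (hZ : Z ∈ Matrix.unitaryGroup (Fin d) ℂ)
    (U : Matrix (Fin d × Fin 2) (Fin d × Fin 2) ℂ)
    (hU : U = (V * hA₀.sqrt) ⊗ₖ Matrix.single (0 : Fin 2) (0 : Fin 2) (1 : ℂ)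
            + (V * hA₁.sqrt * Zᴴ) ⊗ₖ Matrix.single (0 : Fin 2) (1 : Fin 2) (1 : ℂ)
            + (W * hA₁.sqrt) ⊗ₖ Matrix.single (1 : Fin 2) (0 : Fin 2) (1 : ℂ)
            + (-(W * hA₀.sqrt * Zᴴ)) ⊗ₖ Matrix.single (1 : Fin 2) (1 : Fin 2) (1 : ℂ))
    (β : Matrix (Fin 2) (Fin 2) ℂ) (hβ : β.PosSemidef) (hβtr : β.trace = 1)
    (ρ : Matrix (Fin d) (Fin d) ℂ) (hρ : ρ.PosSemidef) (hρtr : ρ.trace = 1)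
    (A₀β A₁β : Matrix (Fin d) (Fin d) ℂ)
    (hA₀β : A₀β = β 0 0 • A₀ + β 0 1 • (Z * hA₁.sqrt * hA₀.sqrt)
        + β 1 0 • (hA₁.sqrt * hA₀.sqrt * Zᴴ) + β 1 1 • (Z * A₁ * Zᴴ))
    (hA₁β : A₁β = β 0 0 • A₁ - β 0 1 • (Z * hA₁.sqrt * hA₀.sqrt)
        - β 1 0 • (hA₁.sqrt * hA₀.sqrt * Zᴴ) + β 1 1 • (Z * A₀ * Zᴴ)) :
    Matrix.trace (U * (ρ ⊗ₖ β) * Uᴴ *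
        ((1 : Matrix (Fin d) (Fin d) ℂ) ⊗ₖ Matrix.single (0 : Fin 2) (0 : Fin 2) (1 : ℂ)))
      = Matrix.trace (A₀β * ρ) ∧
    Matrix.trace (U * (ρ ⊗ₖ β) * Uᴴ *
        ((1 : Matrix (Fin d) (Fin d) ℂ) ⊗ₖ Matrix.single (1 : Fin 2) (1 : Fin 2) (1 : ℂ)))
      = Matrix.trace (A₁β * ρ) ∧
    A₀β.PosSemidef ∧ A₁β.PosSemidef ∧ A₀β + A₁β = 1 := by
  have h0 := sqrt_herm_aux hA₀
  have h1 := sqrt_herm_aux hA₁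
  have s0 := sqrt_mul_self_aux hA₀
  have s1 := sqrt_mul_self_aux hA₁
  have hc : hA₀.sqrt * hA₁.sqrt = hA₁.sqrt * hA₀.sqrt := by
    rw [sqrt_eq_cfc_aux, sqrt_eq_cfc_aux]
    have hAA : Commute A₀ A₁ := by
      rw [show A₁ = 1 - A₀ from eq_sub_of_add_eq' hsum]
      exact (Commute.one_right _).sub_right (Commute.refl _)
    exact ((hAA.cfc_real Real.sqrt).symm.cfc_real Real.sqrt).symm
  have hV' : Vᴴ * V = 1 := (Matrix.mem_unitaryGroup_iff').1 hV
  have hW' : Wᴴ * W = 1 := (Matrix.mem_unitaryGroup_iff').1 hW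
  have hZ' : Z * Zᴴ = 1 := (Matrix.mem_unitaryGroup_iff).1 hZ
  generalize hA₀.sqrt = S at *
  generalize hA₁.sqrt = T at *
  have vv : ∀ X Y : Matrix (Fin d) (Fin d) ℂ, X * Vᴴ * (V * Y) = X * Y := fun X Y => by
    rw [Matrix.mul_assoc, ← Matrix.mul_assoc Vᴴ, hV', Matrix.one_mul]
  have ww : ∀ X Y : Matrix (Fin d) (Fin d) ℂ, X * Wᴴ * (W * Y) = X * Y := fun X Y => by
    rw [Matrix.mul_assoc, ← Matrix.mul_assoc Wᴴ, hW', Matrix.one_mul]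
  have e0 : A₀β = β 0 0 • ((V * S)ᴴ * (V * S)) + β 0 1 • ((V * T * Zᴴ)ᴴ * (V * S))
      + β 1 0 • ((V * S)ᴴ * (V * T * Zᴴ)) + β 1 1 • ((V * T * Zᴴ)ᴴ * (V * T * Zᴴ)) := by
    rw [hA₀β, ← s0, ← s1, Matrix.mul_assoc V T]
    simp only [conjTranspose_mul, conjTranspose_conjTranspose, h0, h1, vv]
    simp only [← Matrix.mul_assoc, hc]
  have e1 : A₁β = β 0 0 • ((W * T)ᴴ * (W * T)) + β 0 1 • ((-(W * S * Zᴴ))ᴴ * (W * T))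
      + β 1 0 • ((W * T)ᴴ * (-(W * S * Zᴴ)))
      + β 1 1 • ((-(W * S * Zᴴ))ᴴ * (-(W * S * Zᴴ))) := by
    rw [hA₁β, ← s0, ← s1, Matrix.mul_assoc W S, Matrix.mul_assoc Z T S, ← hc]
    simp only [conjTranspose_mul, conjTranspose_neg, conjTranspose_conjTranspose, h0, h1,
      Matrix.neg_mul, Matrix.mul_neg, neg_neg, vv, ww, smul_neg, sub_eq_add_neg]
    simp only [← Matrix.mul_assoc]
    simp only [Matrix.mul_assoc, hc]
  refine ⟨?_, ?_, ?_, ?_, ?_⟩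
  · rw [hU, e0]
    exact tr_aux _ _ _ _ ρ β 0 _ _ rfl rfl
  · rw [hU, e1]
    exact tr_aux _ _ _ _ ρ β 1 _ _ rfl rfl
  · rw [e0]; exact psd_aux _ _ β hβ
  · rw [e1]; exact psd_aux _ _ β hβ
  · have hb : β 0 0 + β 1 1 = 1 := by rw [← hβtr, Matrix.trace_fin_two]
    have : A₀β + A₁β = β 0 0 • (A₀ + A₁) + β 1 1 • (Z * (A₀ + A₁) * Zᴴ) := by
      rw [hA₀β, hA₁β, Matrix.mul_add, Matrix.add_mul, smul_add, smul_add]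
      abel
    rw [this, hsum, Matrix.mul_one, hZ', ← add_smul, hb, one_smul]
end

section
/- Let N, d ≥ 1 and let μ be a nice probability measure on U((N+1)d). Then for every i ∈ {0, …, N} and all c, k ∈ {1, …, N} with c ≠ k, 𝔼_{U∼μ}[ U_{ik}* U_{ic} ] = 0; and for every c ∈ {1, …, N}, the matrix 𝔼_{U∼μ}[ U_{ic}* U_{ic} ] is a scalar multiple of the identity, namely 𝔼_{U∼μ}[ U_{ic}* U_{ic} ] = Γ_{ic} I_d with Γ_{ic} := (1/d) Tr[ 𝔼_{U∼μ}[ U_{ic}* U_{ic} ] ]. -/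
open scoped Kronecker
open Matrix MeasureTheory
open scoped ComplexOrder

/-- Entrywise expectation of a matrix-valued function. -/
noncomputable def expec {G : Type*} [MeasurableSpace G] {d : ℕ} (μ : Measure G)
    (f : G → Matrix (Fin d) (Fin d) ℂ) : Matrix (Fin d) (Fin d) ℂ :=
  Matrix.of fun a b => ∫ g, f g a b ∂μ

theorem aux_aem {G : Type*} [MeasurableSpace G] (μ : Measure G) [IsProbabilityMeasure μ]
    (φ : G → G) (h : Measure.map φ μ = μ) : AEMeasurable φ μ := by
  by_contra hc
  rw [Measure.map_of_not_aemeasurable hc] at h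
  exact IsProbabilityMeasure.ne_zero μ h.symm

/-- Invariance of the integral, without any measurability assumption on `f`. -/
theorem aux_int {G : Type*} [MeasurableSpace G] (μ : Measure G) [IsProbabilityMeasure μ]
    (φ ψ : G → G) (h : Measure.map φ μ = μ) (h' : Measure.map ψ μ = μ)
    (hφψ : ∀ x, φ (ψ x) = x) (f : G → ℂ) : ∫ x, f (φ x) ∂μ = ∫ x, f x ∂μ := by
  have a1 := aux_aem μ φ h
  have a2 := aux_aem μ ψ h'
  by_cases hf : AEStronglyMeasurable f μ
  · have := integral_map a1 (f := f) (by rwa [h])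
    rw [h] at this
    exact this.symm
  · have hf2 : ¬ AEStronglyMeasurable (fun x => f (φ x)) μ := by
      intro hg
      apply hf
      have hg' : AEStronglyMeasurable (fun x => f (φ x)) (Measure.map ψ μ) := by rwa [h']
      have := hg'.comp_aemeasurable a2
      simpa [Function.comp_def, hφψ] using this
    rw [integral_non_aestronglyMeasurable hf, integral_non_aestronglyMeasurable hf2]

theorem aux_block {d n : ℕ} (Zc : Fin n → Matrix (Fin d) (Fin d) ℂ) :
    Matrix.blockDiagonal Zc = ∑ c, Zc c ⊗ₖ Matrix.single c c (1 : ℂ) := by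
  ext ⟨a, i⟩ ⟨b, j⟩
  rw [Matrix.sum_apply]
  simp only [Matrix.blockDiagonal_apply, Matrix.kroneckerMap_apply, Matrix.single_apply]
  by_cases hij : i = j
  · subst hij
    simp
  · simp only [hij, if_false]
    symm
    apply Finset.sum_eq_zero
    intro c _
    rw [if_neg, mul_zero]
    rintro ⟨rfl, rfl⟩
    exact hij rfl

theorem aux_unit {d n : ℕ} (Zc : Fin n → Matrix (Fin d) (Fin d) ℂ)
    (h : ∀ c, Zc c ∈ Matrix.unitaryGroup (Fin d) ℂ) :
    Matrix.blockDiagonal Zc ∈ Matrix.unitaryGroup (Fin d × Fin n) ℂ := by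
  rw [Matrix.mem_unitaryGroup_iff, Matrix.star_eq_conjTranspose,
    Matrix.blockDiagonal_conjTranspose, ← Matrix.blockDiagonal_mul]
  have : (fun k => Zc k * (Zc k)ᴴ) = 1 := by
    funext k
    exact (Matrix.mem_unitaryGroup_iff.1 (h k))
  rw [this, Matrix.blockDiagonal_one]

theorem aux_blk {d n : ℕ} (U : Matrix (Fin d × Fin n) (Fin d × Fin n) ℂ)
    (Zc : Fin n → Matrix (Fin d) (Fin d) ℂ) (i c : Fin n) :
    blk (U * Matrix.blockDiagonal Zc) i c = blk U i c * Zc c := by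
  ext a b
  simp [blk, Matrix.mul_apply, Fintype.sum_prod_type, Matrix.blockDiagonal_apply]

theorem aux_main {N d : ℕ}
    [MeasurableSpace (Matrix.unitaryGroup (Fin d × Fin (N + 1)) ℂ)]
    (μ : Measure (Matrix.unitaryGroup (Fin d × Fin (N + 1)) ℂ)) [IsProbabilityMeasure μ]
    (hnice : ∀ Z : Matrix.unitaryGroup (Fin d × Fin (N + 1)) ℂ,
      (∃ Zc : Fin (N + 1) → Matrix (Fin d) (Fin d) ℂ,
        Zc 0 = 1 ∧ (∀ c, Zc c ∈ Matrix.unitaryGroup (Fin d) ℂ) ∧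
        (Z : Matrix (Fin d × Fin (N + 1)) (Fin d × Fin (N + 1)) ℂ)
          = ∑ c, Zc c ⊗ₖ Matrix.single c c (1 : ℂ)) →
      Measure.map (fun U => U * Z) μ = μ)
    (Zc : Fin (N + 1) → Matrix (Fin d) (Fin d) ℂ) (h0 : Zc 0 = 1)
    (hu : ∀ c, Zc c ∈ Matrix.unitaryGroup (Fin d) ℂ) (i k c : Fin (N + 1)) (a b : Fin d) :
    ∫ U, ((Zc k)ᴴ * ((blk (U : Matrix (Fin d × Fin (N + 1)) (Fin d × Fin (N + 1)) ℂ) i k)ᴴ *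
          blk (U : Matrix (Fin d × Fin (N + 1)) (Fin d × Fin (N + 1)) ℂ) i c) * Zc c) a b ∂μ
    = ∫ U, ((blk (U : Matrix (Fin d × Fin (N + 1)) (Fin d × Fin (N + 1)) ℂ) i k)ᴴ *
          blk (U : Matrix (Fin d × Fin (N + 1)) (Fin d × Fin (N + 1)) ℂ) i c) a b ∂μ := by
  let Z : Matrix.unitaryGroup (Fin d × Fin (N + 1)) ℂ := ⟨_, aux_unit Zc hu⟩
  have h1 := hnice Z ⟨Zc, h0, hu, aux_block Zc⟩
  have hu' : ∀ c, (Zc c)ᴴ ∈ Matrix.unitaryGroup (Fin d) ℂ := fun c => Unitary.star_mem (hu c)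
  have h2 := hnice Z⁻¹ ⟨fun c => (Zc c)ᴴ, by simp [h0], hu', by
    rw [← aux_block, ← Matrix.blockDiagonal_conjTranspose]; rfl⟩
  have := aux_int μ _ _ h1 h2 (fun x => by simp) (fun U =>
    ((blk (U : Matrix (Fin d × Fin (N + 1)) (Fin d × Fin (N + 1)) ℂ) i k)ᴴ *
          blk (U : Matrix (Fin d × Fin (N + 1)) (Fin d × Fin (N + 1)) ℂ) i c) a b)
  rw [← this]
  congr 1
  funext U
  have e : ((U * Z : Matrix.unitaryGroup (Fin d × Fin (N + 1)) ℂ) :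
    Matrix (Fin d × Fin (N + 1)) (Fin d × Fin (N + 1)) ℂ)
      = (U : Matrix (Fin d × Fin (N + 1)) (Fin d × Fin (N + 1)) ℂ) * Matrix.blockDiagonal Zc := rfl
  simp only [e, aux_blk, Matrix.conjTranspose_mul, Matrix.mul_assoc]

theorem aux_upd {N d : ℕ} (c : Fin (N + 1)) (W : Matrix (Fin d) (Fin d) ℂ)
    (hW : W ∈ Matrix.unitaryGroup (Fin d) ℂ) (j : Fin (N + 1)) :
    (Function.update (fun _ => 1) c W : Fin (N + 1) → Matrix (Fin d) (Fin d) ℂ) j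
      ∈ Matrix.unitaryGroup (Fin d) ℂ := by
  by_cases h : j = c
  · subst h; simpa using hW
  · simp only [Function.update_of_ne h]; exact one_mem _

/-- for a nice probability measure `μ` on `U((N+1)d)`,
`𝔼[U_{ik}* U_{ic}] = 0` for distinct nonzero `c, k`, and `𝔼[U_{ic}* U_{ic}] = Γ_{ic} I_d`
with `Γ_{ic} = (1/d) Tr[𝔼[U_{ic}* U_{ic}]]` for nonzero `c`. -/
theorem stmt_11 {N d : ℕ} (hN : 1 ≤ N) (hd : 1 ≤ d)
    [MeasurableSpace (Matrix.unitaryGroup (Fin d × Fin (N + 1)) ℂ)]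
    (μ : Measure (Matrix.unitaryGroup (Fin d × Fin (N + 1)) ℂ)) [IsProbabilityMeasure μ]
    (hnice : ∀ Z : Matrix.unitaryGroup (Fin d × Fin (N + 1)) ℂ,
      (∃ Zc : Fin (N + 1) → Matrix (Fin d) (Fin d) ℂ,
        Zc 0 = 1 ∧ (∀ c, Zc c ∈ Matrix.unitaryGroup (Fin d) ℂ) ∧
        (Z : Matrix (Fin d × Fin (N + 1)) (Fin d × Fin (N + 1)) ℂ)
          = ∑ c, Zc c ⊗ₖ Matrix.single c c (1 : ℂ)) →
      Measure.map (fun U => U * Z) μ = μ) :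
    (∀ i c k : Fin (N + 1), c ≠ 0 → k ≠ 0 → c ≠ k →
      expec μ (fun U =>
        (blk (U : Matrix (Fin d × Fin (N + 1)) (Fin d × Fin (N + 1)) ℂ) i k)ᴴ *
          blk (U : Matrix (Fin d × Fin (N + 1)) (Fin d × Fin (N + 1)) ℂ) i c) = 0) ∧
    (∀ i c : Fin (N + 1), c ≠ 0 →
      expec μ (fun U =>
        (blk (U : Matrix (Fin d × Fin (N + 1)) (Fin d × Fin (N + 1)) ℂ) i c)ᴴ *
          blk (U : Matrix (Fin d × Fin (N + 1)) (Fin d × Fin (N + 1)) ℂ) i c)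
        = ((Matrix.trace (expec μ (fun U =>
            (blk (U : Matrix (Fin d × Fin (N + 1)) (Fin d × Fin (N + 1)) ℂ) i c)ᴴ *
              blk (U : Matrix (Fin d × Fin (N + 1)) (Fin d × Fin (N + 1)) ℂ) i c))) / (d : ℂ))
          • 1) := by
  refine ⟨?_, ?_⟩
  · intro i c k hc hk hck
    ext a b
    have hW : (-1 : Matrix (Fin d) (Fin d) ℂ) ∈ Matrix.unitaryGroup (Fin d) ℂ := by
      rw [Matrix.mem_unitaryGroup_iff]; simp
    have := aux_main μ hnice (Function.update (fun _ => 1) c (-1))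
      (by simp [Function.update_of_ne hc.symm]) (aux_upd c _ hW) i k c a b
    simp only [Function.update_of_ne hck.symm, Function.update_self, Matrix.conjTranspose_one,
      one_mul, mul_neg, mul_one, Matrix.neg_apply, integral_neg] at this
    simp only [expec, Matrix.of_apply, Matrix.zero_apply]
    exact self_eq_neg.1 this.symm
  · intro i c hc
    set E := expec μ (fun U =>
        (blk (U : Matrix (Fin d × Fin (N + 1)) (Fin d × Fin (N + 1)) ℂ) i c)ᴴ *
          blk (U : Matrix (Fin d × Fin (N + 1)) (Fin d × Fin (N + 1)) ℂ) i c) with hE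
    have key : ∀ W ∈ Matrix.unitaryGroup (Fin d) ℂ, ∀ a b, ∫ U, (Wᴴ *
        ((blk (U : Matrix (Fin d × Fin (N + 1)) (Fin d × Fin (N + 1)) ℂ) i c)ᴴ *
          blk (U : Matrix (Fin d × Fin (N + 1)) (Fin d × Fin (N + 1)) ℂ) i c) * W) a b ∂μ
        = E a b := by
      intro W hW a b
      have := aux_main μ hnice (Function.update (fun _ => 1) c W)
        (by simp [Function.update_of_ne hc.symm]) (aux_upd c _ hW) i c c a b
      simp only [Function.update_self] at this
      exact this
    have hoff : ∀ a b, a ≠ b → E a b = 0 := by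
      intro a b hab
      let v : Fin d → ℂ := fun j => if j = a then -1 else 1
      have hW : Matrix.diagonal v ∈ Matrix.unitaryGroup (Fin d) ℂ := by
        rw [Matrix.mem_unitaryGroup_iff, Matrix.star_eq_conjTranspose,
          Matrix.diagonal_conjTranspose, Matrix.diagonal_mul_diagonal, ← Matrix.diagonal_one]
        congr 1
        funext j
        by_cases h : j = a <;> simp [v, h]
      have := key _ hW a b
      simp only [Matrix.diagonal_conjTranspose, Matrix.mul_diagonal, Matrix.diagonal_mul] at this
      simp only [v, hab.symm, if_false, if_true, Pi.star_apply, star_neg, star_one, neg_mul,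
        one_mul, mul_one, integral_neg] at this
      exact self_eq_neg.1 this.symm
    have hdiag : ∀ a b, E a a = E b b := by
      intro a b
      let σ := Equiv.swap a b
      let W : Matrix (Fin d) (Fin d) ℂ := (1 : Matrix (Fin d) (Fin d) ℂ).submatrix σ id
      have hW : W ∈ Matrix.unitaryGroup (Fin d) ℂ := by
        rw [Matrix.mem_unitaryGroup_iff, Matrix.star_eq_conjTranspose]
        ext x y
        simp [W, Matrix.mul_apply, Matrix.one_apply]
      rw [← key W hW a a, hE]
      simp only [expec, Matrix.of_apply]
      congr 1
      funext U
      generalize (blk (U : Matrix (Fin d × Fin (N + 1)) (Fin d × Fin (N + 1)) ℂ) i c)ᴴ *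
          blk (U : Matrix (Fin d × Fin (N + 1)) (Fin d × Fin (N + 1)) ℂ) i c = M
      have hs : ∀ x, σ x = a ↔ x = b := by
        intro x
        rw [← Equiv.swap_apply_right a b]
        exact σ.injective.eq_iff
      have hs' : ∀ x, a = σ x ↔ x = b := fun x => eq_comm.trans (hs x)
      simp [W, Matrix.mul_apply, Matrix.one_apply, hs, hs']
    have hd0 : (d : ℂ) ≠ 0 := by
      exact_mod_cast (by omega : d ≠ 0)
    ext a b
    by_cases hab : a = b
    · subst hab
      have ht : Matrix.trace E = d * E a a := by
        simp only [Matrix.trace, Matrix.diag_apply]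
        rw [Finset.sum_congr rfl (fun x _ => hdiag x a)]
        simp
      rw [ht]
      simp [hd0]
    · simp [hoff a b hab, hab]
end

section
/- Let A = (A_1, …, A_N) and B = (B_1, …, B_N) be N-outcome POVMs on ℂ^d. Define the uniform-noise incompatibility robustness α*_u as the supremum of all α ∈ [0,1] such that there exist positive semidefinite matrices C_{ij} ∈ M_d(ℂ) (i, j ∈ {1, …, N}) with Σ_{j=1}^{N} C_{ij} = α A_i + (1−α) I_d/N for all i and Σ_{i=1}^{N} C_{ij} = α B_j + (1−α) I_d/N for all j. Then α*_u equals the infimum, over Hermitian matrices X_1, …, X_N, Y_1, …, Y_N ∈ M_d(ℂ) satisfying X_i + Y_j ≥ 0 for all i, j and 1 + Σ_{i=1}^{N} Tr[X_i A_i] + Σ_{j=1}^{N} Tr[Y_j B_j] ≥ Σ_{i=1}^{N} Tr[X_i]/N + Σ_{j=1}^{N} Tr[Y_j]/N, of the quantity 1 + Σ_{i=1}^{N} Tr[X_i A_i] + Σ_{j=1}^{N} Tr[Y_j B_j]. -/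
open Matrix
open scoped ComplexOrder

abbrev MM (d : ℕ) := Matrix (Fin d) (Fin d) ℂ

lemma trace_vv {d : ℕ} (M : MM d) (v : Fin d → ℂ) :
    (M * vecMulVec v (star v)).trace = star v ⬝ᵥ M *ᵥ v := by
  rw [Matrix.mul_vecMulVec, Matrix.trace_vecMulVec, dotProduct_comm]

lemma trace_psd_mul {d : ℕ} {M C : MM d} (hM : M.PosSemidef) (hC : C.PosSemidef) :
    0 ≤ ((M * C).trace).re := by
  obtain ⟨m, v, rfl⟩ := Matrix.posSemidef_iff_eq_sum_vecMulVec.1 hC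
  rw [Finset.mul_sum, Matrix.trace_sum, Complex.re_sum]
  refine Finset.sum_nonneg fun i _ => ?_
  rw [trace_vv]
  exact (Complex.le_def.1 (hM.dotProduct_mulVec_nonneg (v i))).1

lemma psd_of_trace {d : ℕ} {M : MM d} (hM : M.IsHermitian)
    (h : ∀ v : Fin d → ℂ, v ≠ 0 → 0 ≤ ((M * vecMulVec v (star v)).trace).re) : M.PosSemidef := by
  refine Matrix.posSemidef_iff_dotProduct_mulVec.2 ⟨hM, fun v => ?_⟩
  by_cases hv : v = 0
  · simp [hv]
  have := h v hv
  rw [trace_vv] at this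
  rw [Complex.le_def]
  refine ⟨this, ?_⟩
  have := hM.im_star_dotProduct_mulVec_self v
  simpa using this.symm

lemma riesz {d : ℕ} (g : MM d →ₗ[ℝ] ℝ) :
    ∃ X : MM d, X.IsHermitian ∧ ∀ Z : MM d, Z.IsHermitian → g Z = ((X * Z).trace).re := by
  let X0 : MM d := Matrix.of fun b a =>
    (⟨g (Matrix.single a b 1), -g (Matrix.single a b Complex.I)⟩ : ℂ)
  have h0 : ∀ Z : MM d, g Z = ((X0 * Z).trace).re := by
    intro Z
    have h1 : ∀ a b, Matrix.single a b (Z a b)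
        = (Z a b).re • Matrix.single a b (1:ℂ) + (Z a b).im • Matrix.single a b Complex.I := by
      intro a b
      rw [Matrix.smul_single, Matrix.smul_single, ← Matrix.single_add]
      congr 1
      simpa using (Complex.re_add_im (Z a b)).symm
    conv_lhs => rw [Matrix.matrix_eq_sum_single Z]
    simp only [h1, map_sum, map_add, map_smul, smul_eq_mul]
    simp only [Matrix.trace, Matrix.diag, Matrix.mul_apply, Complex.re_sum]
    rw [Finset.sum_comm]
    refine Finset.sum_congr rfl fun b _ => Finset.sum_congr rfl fun a _ => ?_
    simp [X0, Complex.mul_re]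
    ring
  refine ⟨(1/2 : ℝ) • (X0 + X0ᴴ), ?_, fun Z hZ => ?_⟩
  · rw [Matrix.IsHermitian, Matrix.conjTranspose_smul, Matrix.conjTranspose_add,
      Matrix.conjTranspose_conjTranspose, add_comm]
    simp
  · have h2 : ((X0ᴴ * Z).trace).re = ((X0 * Z).trace).re := by
      have : (X0ᴴ * Z) = (Z * X0)ᴴ := by rw [Matrix.conjTranspose_mul, hZ.eq]
      rw [this, Matrix.trace_conjTranspose, Matrix.trace_mul_comm Z]
      simp
    rw [h0 Z, Matrix.smul_mul, Matrix.trace_smul, Complex.smul_re, add_mul, Matrix.trace_add,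
      Complex.add_re, h2]
    simp; ring

lemma psd_entry {d : ℕ} {Z : MM d} (hZ : Z.PosSemidef) (a b : Fin d) :
    ‖Z a b‖ ≤ (Z.trace).re := by
  have hd : ∀ c, 0 ≤ (Z c c).re ∧ 0 = (Z c c).im := fun c => Complex.le_def.1 (hZ.diag_nonneg (i := c))
  have hle : ∀ c, (Z c c).re ≤ (Z.trace).re := by
    intro c
    rw [Matrix.trace, Complex.re_sum]
    exact Finset.single_le_sum (f := fun c => (Z.diag c).re) (fun i _ => (hd i).1) (Finset.mem_univ c)
  have hdet := (hZ.submatrix ![a, b]).det_nonneg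
  rw [Matrix.det_fin_two] at hdet
  simp only [Matrix.submatrix_apply, Matrix.cons_val_zero, Matrix.cons_val_one] at hdet
  have hba : Z b a = star (Z a b) := (hZ.1.apply b a).symm
  have h1 := (Complex.le_def.1 hdet).1
  rw [hba] at h1
  have h2 : (Z a b * star (Z a b)).re = ‖Z a b‖^2 := by
    rw [Complex.sq_norm, Complex.star_def, Complex.mul_conj]; simp
  rw [Complex.sub_re, h2, Complex.mul_re, ← (hd a).2, ← (hd b).2] at h1
  simp at h1
  have ha := hle a
  have hb := hle b
  have := (hd a).1
  have := (hd b).1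
  refine abs_le_of_sq_le_sq' (a := ‖Z a b‖) ?_ (by linarith) |>.2
  nlinarith

lemma isClosed_psd {d : ℕ} : IsClosed {Z : MM d | Z.PosSemidef} := by
  have : {Z : MM d | Z.PosSemidef} = {Z : MM d | Zᴴ = Z} ∩ ⋂ v : Fin d → ℂ, {Z : MM d | 0 ≤ star v ⬝ᵥ Z *ᵥ v} := by
    ext Z
    simp [Matrix.posSemidef_iff_dotProduct_mulVec, Matrix.IsHermitian]
  rw [this]
  refine (isClosed_eq (by fun_prop) (by fun_prop)).inter (isClosed_iInter fun v => ?_)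
  refine isClosed_le continuous_const ?_
  fun_prop

def SS (N d : ℕ) : Set (Fin N → Fin N → MM d) :=
  {C | (∀ i j, (C i j).PosSemidef) ∧ ∑ i, ∑ j, ((C i j).trace).re = d}

lemma SS_compact (N d : ℕ) : IsCompact (SS N d) := by
  have hK : IsCompact {C : Fin N → Fin N → MM d | ∀ i, C i ∈ {D : Fin N → MM d | ∀ j, D j ∈ {Z : MM d | ∀ a, Z a ∈
      {w : Fin d → ℂ | ∀ b, w b ∈ Metric.closedBall (0:ℂ) d}}}} := by
    apply isCompact_pi_infinite; intro i
    apply isCompact_pi_infinite; intro j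
    apply isCompact_pi_infinite (X := fun _ : Fin d => Fin d → ℂ); intro a
    apply isCompact_pi_infinite; intro b
    exact isCompact_closedBall _ _
  refine hK.of_isClosed_subset ?_ ?_
  · have : SS N d = (⋂ i, ⋂ j, (fun C : Fin N → Fin N → MM d => C i j) ⁻¹' {Z : MM d | Z.PosSemidef})
        ∩ {C | ∑ i, ∑ j, ((C i j).trace).re = d} := by
      ext C; simp [SS]
    rw [this]
    refine IsClosed.inter (isClosed_iInter fun i => isClosed_iInter fun j =>
      isClosed_psd.preimage (by fun_prop)) (isClosed_eq ?_ continuous_const)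
    refine continuous_finsetSum _ fun i _ => continuous_finsetSum _ fun j _ => ?_
    refine Complex.continuous_re.comp ?_
    exact Continuous.matrix_trace (by fun_prop)
  · intro C hC i j a b
    rw [mem_closedBall_zero_iff]
    refine (psd_entry (hC.1 i j) a b).trans ?_
    rw [← hC.2]
    have h0 : ∀ i j, 0 ≤ ((C i j).trace).re := fun i j => (Complex.le_def.1 (hC.1 i j).trace_nonneg).1
    refine (Finset.single_le_sum (f := fun j => ((C i j).trace).re) (fun j _ => h0 i j) (Finset.mem_univ j)).trans ?_
    exact Finset.single_le_sum (f := fun i => ∑ j, ((C i j).trace).re)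
      (fun i _ => Finset.sum_nonneg fun j _ => h0 i j) (Finset.mem_univ i)

lemma SS_convex (N d : ℕ) : Convex ℝ (SS N d) := by
  intro C hC D hD s t hs ht hst
  refine ⟨fun i j => ?_, ?_⟩
  · exact ((hC.1 i j).smul hs).add ((hD.1 i j).smul ht)
  · have : ∀ i j, (((s • C + t • D) i j).trace).re = s * ((C i j).trace).re + t * ((D i j).trace).re := by
      intro i j
      simp [Matrix.trace_add, Matrix.trace_smul]
    simp only [this, Finset.sum_add_distrib, ← Finset.mul_sum]
    rw [hC.2, hD.2, ← add_mul, hst, one_mul]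

def LL (N d : ℕ) : (Fin N → Fin N → MM d) →ₗ[ℝ] (Fin N ⊕ Fin N → MM d) where
  toFun C := Sum.elim (fun i => ∑ j, C i j) (fun j => ∑ i, C i j)
  map_add' C D := by
    ext k : 1
    cases k <;> simp [Finset.sum_add_distrib]
  map_smul' c C := by
    ext k : 1
    cases k <;> simp [Finset.smul_sum]

def TT (N d : ℕ) : (Fin N ⊕ Fin N → MM d) →ₗ[ℝ] ℝ where
  toFun v := ∑ i, ((v (Sum.inl i)).trace).re
  map_add' C D := by simp [Finset.sum_add_distrib]
  map_smul' c C := by simp [Finset.mul_sum]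

lemma LL_cont (N d : ℕ) : Continuous (LL N d) := by
  refine continuous_pi fun k => ?_
  cases k
  · simp only [LL, LinearMap.coe_mk, AddHom.coe_mk, Sum.elim_inl]; fun_prop
  · simp only [LL, LinearMap.coe_mk, AddHom.coe_mk, Sum.elim_inr]; fun_prop

lemma sep {N d : ℕ} (hd : 1 ≤ d) (P Q : Fin N → MM d) (hP : ∀ i, (P i).IsHermitian)
    (hQ : ∀ i, (Q i).IsHermitian) (hT : ∑ i, ((P i).trace).re = d)
    (hno : ¬ ∃ C : Fin N → Fin N → MM d, (∀ i j, (C i j).PosSemidef) ∧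
      (∀ i, ∑ j, C i j = P i) ∧ (∀ j, ∑ i, C i j = Q j)) :
    ∃ X Y : Fin N → MM d, (∀ i, (X i).IsHermitian) ∧ (∀ j, (Y j).IsHermitian) ∧
      (∀ i j, (X i + Y j).PosSemidef) ∧
      ∑ i, ((X i * P i).trace).re + ∑ j, ((Y j * Q j).trace).re < 0 := by
  haveI : LocallyConvexSpace ℝ (MM d) := inferInstanceAs (LocallyConvexSpace ℝ (Fin d → Fin d → ℂ))
  have hcl : IsClosed (LL N d '' SS N d) := ((SS_compact N d).image (LL_cont N d)).isClosed
  have hcv : Convex ℝ (LL N d '' SS N d) := (SS_convex N d).linear_image _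
  have hp : (Sum.elim P Q) ∉ LL N d '' SS N d := by
    rintro ⟨C, hC, h⟩
    exact hno ⟨C, hC.1, fun i => congrFun h (Sum.inl i), fun j => congrFun h (Sum.inr j)⟩
  obtain ⟨f, u, hf1, hf2⟩ := geometric_hahn_banach_point_closed hcv hcl hp
  have hd0 : (0:ℝ) < d := by exact_mod_cast hd
  let g : (Fin N ⊕ Fin N → MM d) →ₗ[ℝ] ℝ := (f : (Fin N ⊕ Fin N → MM d) →ₗ[ℝ] ℝ) - (u / d) • TT N d
  have hgp : g (Sum.elim P Q) < 0 := by
    have : TT N d (Sum.elim P Q) = d := hT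
    simp only [g, LinearMap.sub_apply, LinearMap.smul_apply, this, smul_eq_mul]
    rw [div_mul_cancel₀ _ hd0.ne']
    simpa using hf1
  have hgS : ∀ C ∈ SS N d, 0 ≤ g (LL N d C) := by
    intro C hC
    have : TT N d (LL N d C) = d := by
      rw [← hC.2]
      simp [TT, LL, Matrix.trace_sum]
    simp only [g, LinearMap.sub_apply, LinearMap.smul_apply, this, smul_eq_mul]
    rw [div_mul_cancel₀ _ hd0.ne']
    simpa using (hf2 _ ⟨C, hC, rfl⟩).le
  choose W hW1 hW2 using fun k => riesz (g ∘ₗ LinearMap.single ℝ (fun _ : Fin N ⊕ Fin N => MM d) k)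
  have hgW : ∀ v : Fin N ⊕ Fin N → MM d, (∀ k, (v k).IsHermitian) →
      g v = ∑ i, ((W (Sum.inl i) * v (Sum.inl i)).trace).re
        + ∑ j, ((W (Sum.inr j) * v (Sum.inr j)).trace).re := by
    intro v hv
    rw [← Fintype.sum_sum_type (fun k => ((W k * v k).trace).re)]
    conv_lhs => rw [← Finset.univ_sum_single v, map_sum]
    refine Finset.sum_congr rfl fun k _ => ?_
    rw [← hW2 k _ (hv k)]
    rfl
  refine ⟨fun i => W (Sum.inl i), fun j => W (Sum.inr j), fun i => hW1 _, fun j => hW1 _, ?_, ?_⟩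
  · intro i j
    refine psd_of_trace ((hW1 _).add (hW1 _)) fun v hv => ?_
    set Z := vecMulVec v (star v) with hZ
    have hZp : Z.PosSemidef := Matrix.posSemidef_vecMulVec_self_star v
    have hZ0 : Z ≠ 0 := by
      intro h
      apply hv
      ext a
      have := congrFun (congrFun h a) a
      simpa [hZ, vecMulVec_apply] using this
    have htr : 0 < (Z.trace).re := by
      have h1 := Complex.le_def.1 hZp.trace_nonneg
      refine lt_of_le_of_ne h1.1 fun h => hZ0 (hZp.trace_eq_zero_iff.1 ?_)
      exact Complex.ext h.symm h1.2.symm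
    let c : ℝ := d / (Z.trace).re
    have hc : 0 < c := by positivity
    let C : Fin N → Fin N → MM d := fun k l => if k = i then (if l = j then c • Z else 0) else 0
    have hC : C ∈ SS N d := by
      refine ⟨fun k l => ?_, ?_⟩
      · simp only [C]
        split_ifs
        · exact hZp.smul hc.le
        · exact .zero
        · exact .zero
      · have : ∀ k l, ((C k l).trace).re = if k = i then (if l = j then (d:ℝ) else 0) else 0 := by
          intro k l
          simp only [C]
          split_ifs
          · rw [Matrix.trace_smul, Complex.smul_re, smul_eq_mul, div_mul_cancel₀ _ htr.ne']
          · simp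
          · simp
        simp [this]
    have hCh : ∀ k, (LL N d C k).IsHermitian := by
      have : ∀ k l, (C k l)ᴴ = C k l := fun k l => (hC.1 k l).1
      intro k
      cases k
      · simp [LL, Matrix.IsHermitian, Matrix.conjTranspose_sum, this]
      · simp [LL, Matrix.IsHermitian, Matrix.conjTranspose_sum, this]
    have h0 := hgS C hC
    rw [hgW _ hCh] at h0
    have e1 : ∀ k, LL N d C (Sum.inl k) = if k = i then c • Z else 0 := by
      intro k
      simp only [LL, LinearMap.coe_mk, AddHom.coe_mk, Sum.elim_inl, C]
      split_ifs <;> simp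
    have e2 : ∀ k, LL N d C (Sum.inr k) = if k = j then c • Z else 0 := by
      intro k
      simp only [LL, LinearMap.coe_mk, AddHom.coe_mk, Sum.elim_inr, C]
      simp
    simp only [e1, e2, mul_ite, mul_zero, apply_ite Matrix.trace, apply_ite Complex.re,
      Matrix.trace_zero, Complex.zero_re, Finset.sum_ite_eq', Finset.sum_ite_eq, Finset.mem_univ, if_true,
      Matrix.mul_smul, Matrix.trace_smul, Complex.smul_re, smul_eq_mul] at h0
    rw [← mul_add] at h0
    rw [add_mul, Matrix.trace_add, Complex.add_re]
    exact nonneg_of_mul_nonneg_right h0 hc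
  · have := hgW (Sum.elim P Q) (by rintro (k | k); exacts [hP k, hQ k])
    simp only [Sum.elim_inl, Sum.elim_inr] at this
    rw [← this]; exact hgp

/-- SDP duality for the incompatibility robustness with uniform noise. -/
theorem stmt_15 {N d : ℕ} (hN : 1 ≤ N) (hd : 1 ≤ d)
    (A B : Fin N → Matrix (Fin d) (Fin d) ℂ)
    (hA : ∀ i, (A i).PosSemidef) (hAsum : ∑ i, A i = 1)
    (hB : ∀ j, (B j).PosSemidef) (hBsum : ∑ j, B j = 1) :
    sSup {α : ℝ | 0 ≤ α ∧ α ≤ 1 ∧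
        ∃ C : Fin N → Fin N → Matrix (Fin d) (Fin d) ℂ,
          (∀ i j, (C i j).PosSemidef) ∧
          (∀ i, ∑ j, C i j = (α : ℂ) • A i + (((1 - α : ℝ) : ℂ) / (N : ℂ)) • 1) ∧
          (∀ j, ∑ i, C i j = (α : ℂ) • B j + (((1 - α : ℝ) : ℂ) / (N : ℂ)) • 1)}
      = sInf {r : ℝ |
          ∃ X Y : Fin N → Matrix (Fin d) (Fin d) ℂ,
            (∀ i, (X i).IsHermitian) ∧ (∀ j, (Y j).IsHermitian) ∧
            (∀ i j, (X i + Y j).PosSemidef) ∧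
            (1 + ∑ i, ((X i * A i).trace).re + ∑ j, ((Y j * B j).trace).re ≥
              ∑ i, ((X i).trace).re / (N : ℝ) + ∑ j, ((Y j).trace).re / (N : ℝ)) ∧
            r = 1 + ∑ i, ((X i * A i).trace).re + ∑ j, ((Y j * B j).trace).re} := by
  have hN0 : (0:ℝ) < N := by exact_mod_cast hN
  have hNc : (N:ℂ) ≠ 0 := by exact_mod_cast hN0.ne'
  -- trace against a noisy POVM
  have key : ∀ (α : ℝ) (X F : Fin N → MM d),
      ∑ i, ((X i * ((α : ℂ) • F i + (((1 - α : ℝ) : ℂ) / (N : ℂ)) • 1)).trace).re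
        = α * ∑ i, ((X i * F i).trace).re + (1 - α) * ∑ i, ((X i).trace).re / (N : ℝ) := by
    intro α X F
    rw [Finset.mul_sum, Finset.mul_sum, ← Finset.sum_add_distrib]
    refine Finset.sum_congr rfl fun i _ => ?_
    have : (((1 - α : ℝ) : ℂ) / (N : ℂ)) = (((1 - α) / N : ℝ) : ℂ) := by push_cast; rfl
    rw [this, mul_add, Matrix.mul_smul, Matrix.mul_smul, mul_one, Matrix.trace_add,
      Matrix.trace_smul, Matrix.trace_smul, smul_eq_mul, smul_eq_mul, Complex.add_re,
      Complex.re_ofReal_mul, Complex.re_ofReal_mul]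
    ring
  -- pairing
  have pair : ∀ (X Y P Q : Fin N → MM d) (C : Fin N → Fin N → MM d),
      (∀ i j, (C i j).PosSemidef) → (∀ i, ∑ j, C i j = P i) → (∀ j, ∑ i, C i j = Q j) →
      (∀ i j, (X i + Y j).PosSemidef) →
      0 ≤ ∑ i, ((X i * P i).trace).re + ∑ j, ((Y j * Q j).trace).re := by
    intro X Y P Q C hC hP hQ hXY
    have h1 : ∑ i, ((X i * P i).trace).re = ∑ i, ∑ j, ((X i * C i j).trace).re := by
      refine Finset.sum_congr rfl fun i _ => ?_
      rw [← hP i, Finset.mul_sum, Matrix.trace_sum, Complex.re_sum]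
    have h2 : ∑ j, ((Y j * Q j).trace).re = ∑ i, ∑ j, ((Y j * C i j).trace).re := by
      rw [Finset.sum_comm]
      refine Finset.sum_congr rfl fun i _ => ?_
      rw [← hQ i, Finset.mul_sum, Matrix.trace_sum, Complex.re_sum]
    rw [h1, h2, ← Finset.sum_add_distrib]
    refine Finset.sum_nonneg fun i _ => ?_
    rw [← Finset.sum_add_distrib]
    refine Finset.sum_nonneg fun j _ => ?_
    rw [← Complex.add_re, ← Matrix.trace_add, ← add_mul]
    exact trace_psd_mul (hXY i j) (hC i j)
  set S := {α : ℝ | 0 ≤ α ∧ α ≤ 1 ∧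
        ∃ C : Fin N → Fin N → Matrix (Fin d) (Fin d) ℂ,
          (∀ i j, (C i j).PosSemidef) ∧
          (∀ i, ∑ j, C i j = (α : ℂ) • A i + (((1 - α : ℝ) : ℂ) / (N : ℂ)) • 1) ∧
          (∀ j, ∑ i, C i j = (α : ℂ) • B j + (((1 - α : ℝ) : ℂ) / (N : ℂ)) • 1)} with hS
  have hS0 : (0:ℝ) ∈ S := by
    have e : (N:ℝ) • ((1 / (N:ℝ)^2) • (1 : MM d)) = ((((1 - 0 : ℝ) : ℂ) / (N : ℂ)) • (1 : MM d)) := by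
      rw [smul_smul]
      have : (((1 - 0 : ℝ) : ℂ) / (N : ℂ)) = ((N * (1 / (N:ℝ)^2) : ℝ) : ℂ) := by
        push_cast; field_simp; simp
      rw [this]
      ext a b
      simp [Matrix.smul_apply]
    have e' : ∑ _j : Fin N, ((1 / (N:ℝ)^2) • (1 : MM d)) = ((((1 - 0 : ℝ) : ℂ) / (N : ℂ)) • (1 : MM d)) := by
      rw [← e]
      simp [← Nat.cast_smul_eq_nsmul ℝ]
    refine ⟨le_rfl, zero_le_one, fun _ _ => (1 / (N:ℝ)^2) • (1 : MM d), fun i j => ?_, fun i => ?_, fun j => ?_⟩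
    · exact Matrix.PosSemidef.one.smul (by positivity)
    · rw [e']; simp
    · rw [e']; simp
  have hSb : BddAbove S := ⟨1, fun α h => h.2.1⟩
  have hS1 : sSup S ≤ 1 := csSup_le ⟨0, hS0⟩ fun α h => h.2.1
  have hSn : 0 ≤ sSup S := le_csSup hSb hS0
  set R := {r : ℝ |
          ∃ X Y : Fin N → Matrix (Fin d) (Fin d) ℂ,
            (∀ i, (X i).IsHermitian) ∧ (∀ j, (Y j).IsHermitian) ∧
            (∀ i j, (X i + Y j).PosSemidef) ∧
            (1 + ∑ i, ((X i * A i).trace).re + ∑ j, ((Y j * B j).trace).re ≥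
              ∑ i, ((X i).trace).re / (N : ℝ) + ∑ j, ((Y j).trace).re / (N : ℝ)) ∧
            r = 1 + ∑ i, ((X i * A i).trace).re + ∑ j, ((Y j * B j).trace).re} with hR
  have hR1 : (1:ℝ) ∈ R := by
    refine ⟨0, 0, fun _ => isHermitian_zero, fun _ => isHermitian_zero, fun i j => ?_, ?_, ?_⟩
    · simpa using Matrix.PosSemidef.zero
    · simp
    · simp
  have weak : ∀ α ∈ S, ∀ r ∈ R, α ≤ r := by
    rintro α ⟨h0, h1, C, hC, hCA, hCB⟩ r ⟨X, Y, hX, hY, hXY, hge, rfl⟩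
    have := pair X Y _ _ C hC hCA hCB hXY
    rw [key, key] at this
    nlinarith [mul_le_mul_of_nonneg_left hge (sub_nonneg.2 h1)]
  have hRb : BddBelow R := ⟨0, fun r hr => weak 0 hS0 r hr⟩
  apply le_antisymm
  · exact csSup_le ⟨0, hS0⟩ fun α hα => le_csInf ⟨1, hR1⟩ fun r hr => weak α hα r hr
  refine le_of_forall_gt_imp_ge_of_dense fun α hα => ?_
  by_cases h1 : 1 < α
  · exact (csInf_le hRb hR1).trans h1.le
  push Not at h1
  have hα0 : 0 < α := hSn.trans_lt hα
  have hαS : α ∉ S := fun h => absurd (le_csSup hSb h) (not_le.2 hα)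
  have herm : ∀ F : MM d, F.PosSemidef →
      ((α : ℂ) • F + (((1 - α : ℝ) : ℂ) / (N : ℂ)) • 1).IsHermitian := by
    intro F hF
    have : (((1 - α : ℝ) : ℂ) / (N : ℂ)) = (((1 - α) / N : ℝ) : ℂ) := by push_cast; rfl
    rw [this, Matrix.IsHermitian, Matrix.conjTranspose_add, Matrix.conjTranspose_smul,
      Matrix.conjTranspose_smul, hF.1.eq]
    simp
  have htr : ∑ i, (((α : ℂ) • A i + (((1 - α : ℝ) : ℂ) / (N : ℂ)) • 1).trace).re = d := by
    have := key α (fun _ => 1) A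
    simp only [one_mul] at this
    rw [this, ← Complex.re_sum, ← Matrix.trace_sum, hAsum]
    simp
    field_simp
    ring
  obtain ⟨X, Y, hX, hY, hXY, hlt⟩ := sep hd _ _ (fun i => herm _ (hA i)) (fun i => herm _ (hB i)) htr
    (fun ⟨C, h⟩ => hαS ⟨hα0.le, h1, C, h⟩)
  rw [key, key] at hlt
  obtain ⟨-, -, C0, hC0, hCA, hCB⟩ := hS0
  have ht := pair X Y _ _ C0 hC0 hCA hCB hXY
  rw [key, key] at ht
  set s1 := ∑ i, ((X i * A i).trace).re with hs1
  set s2 := ∑ i, ((Y i * B i).trace).re with hs2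
  set t1 := ∑ i, ((X i).trace).re / (N : ℝ) with ht1
  set t2 := ∑ i, ((Y i).trace).re / (N : ℝ) with ht2
  have ht' : 0 ≤ t1 + t2 := by linarith
  have hs' : s1 + s2 < 0 := by
    by_contra hcon
    push Not at hcon
    nlinarith [mul_nonneg hα0.le hcon, mul_nonneg (sub_nonneg.2 h1) ht']
  have hD : 0 < (t1 + t2) - (s1 + s2) := by linarith
  let l : ℝ := 1 / ((t1 + t2) - (s1 + s2))
  have hl : 0 < l := by positivity
  have hl1 : l * ((t1 + t2) - (s1 + s2)) = 1 := by simp only [l]; field_simp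
  have hs1' : ∑ i, (((l • X i) * A i).trace).re = l * s1 := by
    rw [hs1, Finset.mul_sum]; simp
  have hs2' : ∑ i, (((l • Y i) * B i).trace).re = l * s2 := by
    rw [hs2, Finset.mul_sum]; simp
  have ht1' : ∑ i, ((l • X i).trace).re / (N:ℝ) = l * t1 := by
    rw [ht1, Finset.mul_sum]; simp [mul_div_assoc]
  have ht2' : ∑ i, ((l • Y i).trace).re / (N:ℝ) = l * t2 := by
    rw [ht2, Finset.mul_sum]; simp [mul_div_assoc]
  have hmem : 1 + l * s1 + l * s2 ∈ R := by
    refine ⟨fun i => l • X i, fun i => l • Y i, fun i => ?_, fun i => ?_, fun i j => ?_, ?_, ?_⟩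
    · rw [Matrix.IsHermitian, Matrix.conjTranspose_smul, (hX i).eq]; simp
    · rw [Matrix.IsHermitian, Matrix.conjTranspose_smul, (hY i).eq]; simp
    · rw [← smul_add]; exact (hXY i j).smul hl.le
    · rw [hs1', hs2', ht1', ht2']; linarith
    · rw [hs1', hs2']
  refine (csInf_le hRb hmem).trans ?_
  nlinarith [mul_lt_mul_of_pos_left hlt hl]
end

section
/- Let A = (A_1, …, A_N) and B = (B_1, …, B_N) be N-outcome POVMs on ℂ^d. Define the depolarizing-noise incompatibility robustness α*_d as the supremum of all α ∈ [0,1] such that there exist positive semidefinite matrices C_{ij} ∈ M_d(ℂ) with Σ_{j=1}^{N} C_{ij} = α A_i + (1−α) (Tr[A_i]/d) I_d for all i and Σ_{i=1}^{N} C_{ij} = α B_j + (1−α) (Tr[B_j]/d) I_d for all j. Then α*_d equals the infimum, over Hermitian matrices X_1, …, X_N, Y_1, …, Y_N ∈ M_d(ℂ) satisfying X_i + Y_j ≥ 0 for all i, j and 1 + Σ_{i=1}^{N} Tr[X_i A_i] + Σ_{j=1}^{N} Tr[Y_j B_j] ≥ Σ_{i=1}^{N} Tr[X_i] Tr[A_i]/d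 + Σ_{j=1}^{N} Tr[Y_j] Tr[B_j]/d, of the quantity 1 + Σ_{i=1}^{N} Tr[X_i A_i] + Σ_{j=1}^{N} Tr[Y_j B_j]. -/
open Matrix
open scoped ComplexOrder

section helpers

attribute [local instance] Matrix.normedAddCommGroup Matrix.normedSpace

lemma aux_psd_form {d : ℕ} {M : Matrix (Fin d) (Fin d) ℂ} (hM : M.PosSemidef) :
    ∃ (m : ℕ) (v : Fin m → (Fin d → ℂ)), M = ∑ i, vecMulVec (v i) (star (v i)) :=
  Matrix.posSemidef_iff_eq_sum_vecMulVec.1 hM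

lemma aux_trace_vec {d : ℕ} (Z : Matrix (Fin d) (Fin d) ℂ) (v : Fin d → ℂ) :
    (Z * vecMulVec v (star v)).trace = star v ⬝ᵥ (Z *ᵥ v) := by
  rw [Matrix.mul_vecMulVec, Matrix.trace_vecMulVec, dotProduct_comm]

lemma aux_trace_nonneg {d : ℕ} {Z C : Matrix (Fin d) (Fin d) ℂ} (hZ : Z.PosSemidef)
    (hC : C.PosSemidef) : 0 ≤ ((Z * C).trace).re := by
  obtain ⟨m, v, rfl⟩ := aux_psd_form hC
  rw [Matrix.mul_sum, Matrix.trace_sum, Complex.re_sum]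
  refine Finset.sum_nonneg fun i _ => ?_
  rw [aux_trace_vec]
  exact (Complex.le_def.1 (hZ.dotProduct_mulVec_nonneg (v i))).1

lemma aux_entry {d : ℕ} {C : Matrix (Fin d) (Fin d) ℂ} (hC : C.PosSemidef) (k l : Fin d) :
    ‖C k l‖ ≤ C.trace.re := by
  obtain ⟨m, v, rfl⟩ := aux_psd_form hC
  rw [Matrix.trace_sum, Complex.re_sum, Matrix.sum_apply]
  refine (norm_sum_le _ _).trans (Finset.sum_le_sum fun i _ => ?_)
  rw [Matrix.trace_vecMulVec, vecMulVec_apply, norm_mul, Pi.star_apply, norm_star]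
  have h1 : (v i ⬝ᵥ star (v i)).re = ∑ x, ‖v i x‖ ^ 2 := by
    simp only [dotProduct, Complex.re_sum, Pi.star_apply]
    refine Finset.sum_congr rfl fun x _ => ?_
    rw [Complex.star_def, Complex.mul_conj, Complex.ofReal_re, Complex.normSq_eq_norm_sq]
  rw [h1]
  have hk : ‖v i k‖ ^ 2 ≤ ∑ x, ‖v i x‖ ^ 2 :=
    Finset.single_le_sum (f := fun x => ‖v i x‖ ^ 2) (fun x _ => sq_nonneg _) (Finset.mem_univ k)
  have hl : ‖v i l‖ ^ 2 ≤ ∑ x, ‖v i x‖ ^ 2 :=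
    Finset.single_le_sum (f := fun x => ‖v i x‖ ^ 2) (fun x _ => sq_nonneg _) (Finset.mem_univ l)
  nlinarith [sq_nonneg (‖v i k‖ - ‖v i l‖)]

lemma aux_closed {d : ℕ} : IsClosed {C : Matrix (Fin d) (Fin d) ℂ | C.PosSemidef} := by
  have : {C : Matrix (Fin d) (Fin d) ℂ | C.PosSemidef} =
      {C | Cᴴ = C} ∩ ⋂ v : Fin d → ℂ, {C | 0 ≤ star v ⬝ᵥ (C *ᵥ v)} := by
    ext C
    simp only [Set.mem_ofPred_eq, Set.mem_inter_iff, Set.mem_iInter,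
      Matrix.posSemidef_iff_dotProduct_mulVec, Matrix.IsHermitian]
  rw [this]
  refine IsClosed.inter (isClosed_eq ?_ continuous_id) (isClosed_iInter fun v => ?_)
  · exact Continuous.matrix_conjTranspose continuous_id
  · refine isClosed_le continuous_const ?_
    exact Continuous.dotProduct continuous_const (Continuous.matrix_mulVec continuous_id continuous_const)

/-- marginals -/
def auxMarg {N d : ℕ} (C : Fin N → Fin N → Matrix (Fin d) (Fin d) ℂ) :
    (Fin N → Matrix (Fin d) (Fin d) ℂ) × (Fin N → Matrix (Fin d) (Fin d) ℂ) :=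
  (fun i => ∑ j, C i j, fun j => ∑ i, C i j)

/-- cone of marginals -/
def auxCone (N d : ℕ) :
    Set ((Fin N → Matrix (Fin d) (Fin d) ℂ) × (Fin N → Matrix (Fin d) (Fin d) ℂ)) :=
  auxMarg '' {C | ∀ i j, (C i j).PosSemidef}

lemma auxMarg_cont {N d : ℕ} : Continuous (auxMarg (N := N) (d := d)) := by
  unfold auxMarg
  fun_prop

lemma aux_compact (N d : ℕ) (R : ℝ) :
    IsCompact {C : Fin N → Fin N → Matrix (Fin d) (Fin d) ℂ |
      (∀ i j, (C i j).PosSemidef) ∧ ∑ i, ∑ j, ((C i j).trace).re ≤ R} := by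
  haveI : ProperSpace (Fin N → Fin N → Matrix (Fin d) (Fin d) ℂ) :=
    inferInstanceAs (ProperSpace (Fin N → Fin N → Fin d → Fin d → ℂ))
  refine Metric.isCompact_of_isClosed_isBounded ?_ ?_
  · refine IsClosed.inter ?_ ?_
    · have : {C : Fin N → Fin N → Matrix (Fin d) (Fin d) ℂ | ∀ i j, (C i j).PosSemidef} =
        ⋂ i, ⋂ j, (fun C => C i j) ⁻¹' {C | C.PosSemidef} := by
        ext; simp
      show IsClosed {C : Fin N → Fin N → Matrix (Fin d) (Fin d) ℂ | ∀ i j, (C i j).PosSemidef}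
      rw [this]
      refine isClosed_iInter fun i => isClosed_iInter fun j => aux_closed.preimage ?_
      fun_prop
    · show IsClosed {C : Fin N → Fin N → Matrix (Fin d) (Fin d) ℂ | ∑ i, ∑ j, ((C i j).trace).re ≤ R}
      refine isClosed_le ?_ continuous_const
      refine continuous_finsetSum _ fun i _ => continuous_finsetSum _ fun j _ => ?_
      refine Complex.continuous_re.comp (Continuous.matrix_trace ?_)
      fun_prop
  · refine (Metric.isBounded_closedBall (x := 0) (r := max R 0)).subset ?_
    rintro C ⟨hC, hR⟩
    rw [mem_closedBall_zero_iff]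
    have h0 : ∀ i j, 0 ≤ ((C i j).trace).re := fun i j =>
      (Complex.le_def.1 (hC i j).trace_nonneg).1
    refine (pi_norm_le_iff_of_nonneg (le_max_right _ _)).2 fun i =>
      (pi_norm_le_iff_of_nonneg (le_max_right _ _)).2 fun j =>
      (Matrix.norm_le_iff (le_max_right _ _)).2 fun k l => ?_
    refine (aux_entry (hC i j) k l).trans (le_trans ?_ (le_max_left _ _))
    refine le_trans ?_ hR
    refine le_trans (Finset.single_le_sum (f := fun j => ((C i j).trace).re)
      (fun j _ => h0 i j) (Finset.mem_univ j)) ?_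
    exact Finset.single_le_sum (f := fun i => ∑ j, ((C i j).trace).re)
      (fun i _ => Finset.sum_nonneg fun j _ => h0 i j) (Finset.mem_univ i)

lemma auxCone_closed (N d : ℕ) : IsClosed (auxCone N d) := by
  let T : (Fin N → Matrix (Fin d) (Fin d) ℂ) × (Fin N → Matrix (Fin d) (Fin d) ℂ) → ℝ :=
    fun p => ∑ i, ((p.1 i).trace).re
  have hT : Continuous T := by
    refine continuous_finsetSum _ fun i _ => ?_
    refine Complex.continuous_re.comp (Continuous.matrix_trace ?_)
    fun_prop
  refine isClosed_of_closure_subset fun y hy => ?_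
  have hU : IsOpen {p | T p < T y + 1} := isOpen_lt hT continuous_const
  have hK := (aux_compact N d (T y + 1)).image (auxMarg_cont (N := N) (d := d))
  have hy2 : y ∈ closure ({p | T p < T y + 1} ∩ auxCone N d) := by
    apply hU.inter_closure
    exact ⟨by simp, hy⟩
  have hsub : {p | T p < T y + 1} ∩ auxCone N d ⊆ auxMarg '' {C |
      (∀ i j, (C i j).PosSemidef) ∧ ∑ i, ∑ j, ((C i j).trace).re ≤ T y + 1} := by
    rintro p ⟨hp, C, hC, rfl⟩
    refine ⟨C, ⟨hC, ?_⟩, rfl⟩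
    have : T (auxMarg C) = ∑ i, ∑ j, ((C i j).trace).re := by
      simp [T, auxMarg, Matrix.trace_sum]
    rw [← this]
    exact le_of_lt hp
  have := closure_minimal hsub hK.isClosed hy2
  obtain ⟨C, hC, rfl⟩ := this
  exact ⟨C, hC.1, rfl⟩

lemma auxMarg_add {N d : ℕ} (C D : Fin N → Fin N → Matrix (Fin d) (Fin d) ℂ) :
    auxMarg (C + D) = auxMarg C + auxMarg D := by
  ext <;> simp [auxMarg, Finset.sum_add_distrib, Matrix.add_apply]

lemma auxMarg_smul {N d : ℕ} (s : ℝ) (C : Fin N → Fin N → Matrix (Fin d) (Fin d) ℂ) :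
    auxMarg (s • C) = s • auxMarg C := by
  refine Prod.ext (funext fun i => ?_) (funext fun j => ?_)
  · exact (Finset.smul_sum (r := s) (f := fun j => C i j) (s := Finset.univ)).symm
  · exact (Finset.smul_sum (r := s) (f := fun i => C i j) (s := Finset.univ)).symm

lemma aux_smul_psd {d : ℕ} {C : Matrix (Fin d) (Fin d) ℂ} (hC : C.PosSemidef) {s : ℝ}
    (hs : 0 ≤ s) : (s • C).PosSemidef := hC.smul hs

lemma auxCone_convex (N d : ℕ) : Convex ℝ (auxCone N d) := by
  rintro _ ⟨C, hC, rfl⟩ _ ⟨D, hD, rfl⟩ a b ha hb _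
  refine ⟨a • C + b • D, fun i j => ?_, by rw [auxMarg_add, auxMarg_smul, auxMarg_smul]⟩
  exact (aux_smul_psd (hC i j) ha).add (aux_smul_psd (hD i j) hb)

/-- Representation of real functionals on Hermitian matrices. -/
lemma aux_repr {d : ℕ} (f : Matrix (Fin d) (Fin d) ℂ →ₗ[ℝ] ℝ) :
    ∃ X : Matrix (Fin d) (Fin d) ℂ, X.IsHermitian ∧
      ∀ M : Matrix (Fin d) (Fin d) ℂ, M.IsHermitian → f M = ((X * M).trace).re := by
  let X0 : Matrix (Fin d) (Fin d) ℂ := Matrix.of fun l k =>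
    (⟨f (Matrix.single k l 1), - f (Matrix.single k l Complex.I)⟩ : ℂ)
  have h0 : ∀ M, f M = ((X0 * M).trace).re := by
    intro M
    have hM : M = ∑ k, ∑ l, ((M k l).re • Matrix.single k l (1 : ℂ) +
        (M k l).im • Matrix.single k l Complex.I) := by
      conv_lhs => rw [Matrix.matrix_eq_sum_single M]
      refine Finset.sum_congr rfl fun k _ => Finset.sum_congr rfl fun l _ => ?_
      rw [Matrix.smul_single, Matrix.smul_single, ← Matrix.single_add]
      congr 1
      apply Complex.ext <;> simp
    conv_lhs => rw [hM]
    simp only [map_sum, map_add, map_smul, smul_eq_mul, Matrix.trace, Matrix.diag, Matrix.mul_apply,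
      Complex.re_sum]
    rw [Finset.sum_comm]
    refine Finset.sum_congr rfl fun k _ => Finset.sum_congr rfl fun l _ => ?_
    simp only [X0, Matrix.of_apply, Complex.mul_re]
    ring
  refine ⟨(1/2 : ℝ) • (X0 + X0ᴴ), ?_, fun M hM => ?_⟩
  · rw [Matrix.IsHermitian, Matrix.conjTranspose_smul, Matrix.conjTranspose_add,
      Matrix.conjTranspose_conjTranspose, add_comm, star_trivial]
  · have h1 : ((X0ᴴ * M).trace).re = ((X0 * M).trace).re := by
      have : X0ᴴ * M = (M * X0)ᴴ := by rw [Matrix.conjTranspose_mul, hM.eq]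
      rw [this, Matrix.trace_conjTranspose, Matrix.trace_mul_comm]
      simp
    rw [Matrix.smul_mul, Matrix.trace_smul, Complex.smul_re, Matrix.add_mul, Matrix.trace_add,
      Complex.add_re, h1, h0 M, smul_eq_mul]
    ring

lemma aux_pair {N d : ℕ} (X Y : Fin N → Matrix (Fin d) (Fin d) ℂ)
    (C : Fin N → Fin N → Matrix (Fin d) (Fin d) ℂ) :
    ∑ i, ((X i * ∑ j, C i j).trace).re + ∑ j, ((Y j * ∑ i, C i j).trace).re
      = ∑ i, ∑ j, (((X i + Y j) * C i j).trace).re := by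
  simp only [Matrix.mul_sum, Matrix.trace_sum, Complex.re_sum, Matrix.add_mul, Matrix.trace_add,
    Complex.add_re, Finset.sum_add_distrib]
  congr 1
  exact Finset.sum_comm

/-- Separation. -/
lemma aux_sep {N d : ℕ} (P Q : Fin N → Matrix (Fin d) (Fin d) ℂ)
    (hP : ∀ i, (P i).IsHermitian) (hQ : ∀ i, (Q i).IsHermitian)
    (h : (P, Q) ∉ auxCone N d) :
    ∃ X Y : Fin N → Matrix (Fin d) (Fin d) ℂ,
      (∀ i, (X i).IsHermitian) ∧ (∀ j, (Y j).IsHermitian) ∧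
      (∀ i j, (X i + Y j).PosSemidef) ∧
      ∑ i, ((X i * P i).trace).re + ∑ j, ((Y j * Q j).trace).re < 0 := by
  haveI : LocallyConvexSpace ℝ ((Fin N → Matrix (Fin d) (Fin d) ℂ) ×
      (Fin N → Matrix (Fin d) (Fin d) ℂ)) :=
    inferInstanceAs (LocallyConvexSpace ℝ ((Fin N → Fin d → Fin d → ℂ) ×
      (Fin N → Fin d → Fin d → ℂ)))
  obtain ⟨f, u, hfu, hK⟩ := geometric_hahn_banach_point_closed (auxCone_convex N d)
    (auxCone_closed N d) h
  have hu : u < 0 := by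
    have := hK 0 ⟨0, fun i j => Matrix.PosSemidef.zero, by ext <;> simp [auxMarg]⟩
    simpa using this
  have hpos : ∀ b ∈ auxCone N d, 0 ≤ f b := by
    rintro _ ⟨C, hC, rfl⟩
    by_contra hneg
    push Not at hneg
    have hs : 0 ≤ u / f (auxMarg C) := (div_pos_of_neg_of_neg hu hneg).le
    have := hK ((u / f (auxMarg C)) • auxMarg C)
      ⟨_, fun i j => aux_smul_psd (hC i j) hs, auxMarg_smul _ C⟩
    rw [map_smul, smul_eq_mul, div_mul_cancel₀ _ hneg.ne] at this
    exact lt_irrefl _ this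
  have hX : ∀ i, ∃ X : Matrix (Fin d) (Fin d) ℂ, X.IsHermitian ∧
      ∀ M : Matrix (Fin d) (Fin d) ℂ, M.IsHermitian →
        f (Pi.single i M, 0) = ((X * M).trace).re := fun i =>
    aux_repr (f.toLinearMap ∘ₗ LinearMap.inl ℝ _ _ ∘ₗ
      LinearMap.single ℝ (fun _ : Fin N => Matrix (Fin d) (Fin d) ℂ) i)
  have hY : ∀ i, ∃ X : Matrix (Fin d) (Fin d) ℂ, X.IsHermitian ∧
      ∀ M : Matrix (Fin d) (Fin d) ℂ, M.IsHermitian →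
        f (0, Pi.single i M) = ((X * M).trace).re := fun i =>
    aux_repr (f.toLinearMap ∘ₗ LinearMap.inr ℝ _ _ ∘ₗ
      LinearMap.single ℝ (fun _ : Fin N => Matrix (Fin d) (Fin d) ℂ) i)
  choose X hXh hXf using hX
  choose Y hYh hYf using hY
  refine ⟨X, Y, hXh, hYh, fun i j => ?_, ?_⟩
  · rw [Matrix.posSemidef_iff_dotProduct_mulVec]
    have hH := (hXh i).add (hYh j)
    refine ⟨hH, fun v => ?_⟩
    have hV : (vecMulVec v (star v)).PosSemidef := Matrix.posSemidef_vecMulVec_self_star v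
    have h1 : 0 ≤ f (Pi.single i (vecMulVec v (star v)), Pi.single j (vecMulVec v (star v))) := by
      apply hpos
      refine ⟨fun i' j' => if i' = i ∧ j' = j then vecMulVec v (star v) else 0, ?_, ?_⟩
      · intro i' j'
        show (if i' = i ∧ j' = j then vecMulVec v (star v) else 0).PosSemidef
        split_ifs
        · exact hV
        · exact Matrix.PosSemidef.zero
      · unfold auxMarg
        refine Prod.ext ?_ ?_
        · funext i'
          by_cases hi : i' = i
          · subst hi; simp
          · simp [hi]
        · funext j'
          by_cases hi : j' = j
          · subst hi; simp
          · simp [hi]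
    have h2 : f (Pi.single i (vecMulVec v (star v)), Pi.single j (vecMulVec v (star v)))
        = (star v ⬝ᵥ ((X i + Y j) *ᵥ v)).re := by
      rw [← aux_trace_vec, Matrix.add_mul, Matrix.trace_add, Complex.add_re,
        ← hXf i _ hV.1, ← hYf j _ hV.1, ← map_add]
      simp
    rw [Complex.le_def]
    refine ⟨by rw [← h2]; simpa using h1, ?_⟩
    have := hH.im_star_dotProduct_mulVec_self v
    simpa using this.symm
  · have h3 : f (P, Q) = ∑ i, ((X i * P i).trace).re + ∑ j, ((Y j * Q j).trace).re := by
      have hPQ : (P, Q) = ∑ i, ((Pi.single i (P i), 0) : (Fin N → Matrix (Fin d) (Fin d) ℂ) × (Fin N → Matrix (Fin d) (Fin d) ℂ))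
          + ∑ j, ((0, Pi.single j (Q j)) : (Fin N → Matrix (Fin d) (Fin d) ℂ) × (Fin N → Matrix (Fin d) (Fin d) ℂ)) := by
        refine Prod.ext ?_ ?_
        · simp [Prod.fst_sum, Finset.univ_sum_single]
        · simp [Prod.snd_sum, Finset.univ_sum_single]
      rw [hPQ, map_add, map_sum, map_sum]
      congr 1
      · exact Finset.sum_congr rfl fun i _ => hXf i _ (hP i)
      · exact Finset.sum_congr rfl fun i _ => hYf i _ (hQ i)
    rw [← h3]
    exact hfu.trans hu

lemma aux_expand {d : ℕ} (X A : Matrix (Fin d) (Fin d) ℂ) (hA : A.PosSemidef) (α : ℝ) :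
    ((X * ((α : ℂ) • A + (((1 - α : ℝ) : ℂ) * (A.trace / (d : ℂ))) • 1)).trace).re
      = α * ((X * A).trace).re + (1 - α) * (X.trace.re * A.trace.re / (d : ℝ)) := by
  have h : A.trace = ((A.trace.re : ℝ) : ℂ) := by
    apply Complex.ext
    · simp
    · simpa using (Complex.le_def.1 hA.trace_nonneg).2.symm
  have h2 : (((1 - α : ℝ) : ℂ) * (A.trace / (d : ℂ))) = (((1 - α) * (A.trace.re / d) : ℝ) : ℂ) := by
    conv_lhs => rw [h]
    push_cast
    ring
  rw [h2, Matrix.mul_add, Matrix.trace_add, Matrix.mul_smul, Matrix.mul_smul, Matrix.trace_smul,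
    Matrix.trace_smul, Matrix.mul_one, Complex.add_re, smul_eq_mul, smul_eq_mul,
    Complex.re_ofReal_mul, Complex.re_ofReal_mul]
  ring

lemma aux_expand_sum {N d : ℕ} (X Y A B : Fin N → Matrix (Fin d) (Fin d) ℂ)
    (hA : ∀ i, (A i).PosSemidef) (hB : ∀ i, (B i).PosSemidef) (α : ℝ) :
    ∑ i, ((X i * ((α : ℂ) • A i + (((1 - α : ℝ) : ℂ) * ((A i).trace / (d : ℂ))) • 1)).trace).re
    + ∑ i, ((Y i * ((α : ℂ) • B i + (((1 - α : ℝ) : ℂ) * ((B i).trace / (d : ℂ))) • 1)).trace).re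
    = α * (∑ i, ((X i * A i).trace).re + ∑ j, ((Y j * B j).trace).re) + (1 - α) *
      (∑ i, ((X i).trace).re * ((A i).trace).re / (d : ℝ)
                + ∑ j, ((Y j).trace).re * ((B j).trace).re / (d : ℝ)) := by
  simp only [aux_expand _ _ (hA _), aux_expand _ _ (hB _), Finset.sum_add_distrib,
    ← Finset.mul_sum]
  ring

lemma aux_weak {N d : ℕ} (X Y A B : Fin N → Matrix (Fin d) (Fin d) ℂ)
    (hA : ∀ i, (A i).PosSemidef) (hB : ∀ i, (B i).PosSemidef) (α : ℝ)
    (hXY : ∀ i j, (X i + Y j).PosSemidef)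
    (C : Fin N → Fin N → Matrix (Fin d) (Fin d) ℂ)
    (hC : ∀ i j, (C i j).PosSemidef)
    (h1 : ∀ i, ∑ j, C i j
            = (α : ℂ) • A i + (((1 - α : ℝ) : ℂ) * ((A i).trace / (d : ℂ))) • 1)
    (h2 : ∀ j, ∑ i, C i j
            = (α : ℂ) • B j + (((1 - α : ℝ) : ℂ) * ((B j).trace / (d : ℂ))) • 1) :
    0 ≤ α * (∑ i, ((X i * A i).trace).re + ∑ j, ((Y j * B j).trace).re) + (1 - α) *
      (∑ i, ((X i).trace).re * ((A i).trace).re / (d : ℝ)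
                + ∑ j, ((Y j).trace).re * ((B j).trace).re / (d : ℝ)) := by
  rw [← aux_expand_sum X Y A B hA hB α]
  simp only [← h1, ← h2]
  rw [aux_pair]
  exact Finset.sum_nonneg fun i _ => Finset.sum_nonneg fun j _ =>
    aux_trace_nonneg (hXY i j) (hC i j)

lemma aux_noisy {d : ℕ} (A : Matrix (Fin d) (Fin d) ℂ) (hA : A.PosSemidef) (α : ℝ)
    (h0 : 0 ≤ α) (h1 : α ≤ 1) :
    ((α : ℂ) • A + (((1 - α : ℝ) : ℂ) * (A.trace / (d : ℂ))) • 1).PosSemidef := by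
  refine (hA.smul (by exact_mod_cast h0)).add (Matrix.PosSemidef.one.smul ?_)
  refine mul_nonneg (by exact_mod_cast sub_nonneg.2 h1) ?_
  rw [div_eq_mul_inv]
  refine mul_nonneg hA.trace_nonneg ?_
  have : (0 : ℝ) ≤ (d : ℝ)⁻¹ := by positivity
  have e : (((d : ℝ)⁻¹ : ℝ) : ℂ) = (d : ℂ)⁻¹ := by push_cast; rfl

  rw [← e]

  exact Complex.zero_le_real.2 this

end helpers

/-- SDP duality for the incompatibility robustness with depolarizing noise. -/
theorem stmt_16 {N d : ℕ} (hN : 1 ≤ N) (hd : 1 ≤ d)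
    (A B : Fin N → Matrix (Fin d) (Fin d) ℂ)
    (hA : ∀ i, (A i).PosSemidef) (hAsum : ∑ i, A i = 1)
    (hB : ∀ j, (B j).PosSemidef) (hBsum : ∑ j, B j = 1) :
    sSup {α : ℝ | 0 ≤ α ∧ α ≤ 1 ∧
        ∃ C : Fin N → Fin N → Matrix (Fin d) (Fin d) ℂ,
          (∀ i j, (C i j).PosSemidef) ∧
          (∀ i, ∑ j, C i j
            = (α : ℂ) • A i + (((1 - α : ℝ) : ℂ) * ((A i).trace / (d : ℂ))) • 1) ∧
          (∀ j, ∑ i, C i j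
            = (α : ℂ) • B j + (((1 - α : ℝ) : ℂ) * ((B j).trace / (d : ℂ))) • 1)}
      = sInf {r : ℝ |
          ∃ X Y : Fin N → Matrix (Fin d) (Fin d) ℂ,
            (∀ i, (X i).IsHermitian) ∧ (∀ j, (Y j).IsHermitian) ∧
            (∀ i j, (X i + Y j).PosSemidef) ∧
            (1 + ∑ i, ((X i * A i).trace).re + ∑ j, ((Y j * B j).trace).re ≥
              ∑ i, ((X i).trace).re * ((A i).trace).re / (d : ℝ)
                + ∑ j, ((Y j).trace).re * ((B j).trace).re / (d : ℝ)) ∧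
            r = 1 + ∑ i, ((X i * A i).trace).re + ∑ j, ((Y j * B j).trace).re} := by
  have hdC : (d : ℂ) ≠ 0 := by
    have : d ≠ 0 := by omega
    exact_mod_cast this
  have htr : ∀ A : Fin N → Matrix (Fin d) (Fin d) ℂ, ∑ i, A i = 1 →
      ∑ i, (A i).trace / (d : ℂ) = 1 := by
    intro A h
    rw [← Finset.sum_div, ← Matrix.trace_sum, h, Matrix.trace_one, Fintype.card_fin, div_self hdC]
  have hnn : ∀ A : Matrix (Fin d) (Fin d) ℂ, A.PosSemidef → 0 ≤ A.trace / (d : ℂ) := by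
    intro A hA
    rw [div_eq_mul_inv]
    refine mul_nonneg hA.trace_nonneg ?_
    have : (0 : ℝ) ≤ (d : ℝ)⁻¹ := by positivity
    have e : (((d : ℝ)⁻¹ : ℝ) : ℂ) = (d : ℂ)⁻¹ := by push_cast; rfl

    rw [← e]

    exact Complex.zero_le_real.2 this
  set S := {α : ℝ | 0 ≤ α ∧ α ≤ 1 ∧
        ∃ C : Fin N → Fin N → Matrix (Fin d) (Fin d) ℂ,
          (∀ i j, (C i j).PosSemidef) ∧
          (∀ i, ∑ j, C i j
            = (α : ℂ) • A i + (((1 - α : ℝ) : ℂ) * ((A i).trace / (d : ℂ))) • 1) ∧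
          (∀ j, ∑ i, C i j
            = (α : ℂ) • B j + (((1 - α : ℝ) : ℂ) * ((B j).trace / (d : ℂ))) • 1)} with hS
  set T := {r : ℝ |
          ∃ X Y : Fin N → Matrix (Fin d) (Fin d) ℂ,
            (∀ i, (X i).IsHermitian) ∧ (∀ j, (Y j).IsHermitian) ∧
            (∀ i j, (X i + Y j).PosSemidef) ∧
            (1 + ∑ i, ((X i * A i).trace).re + ∑ j, ((Y j * B j).trace).re ≥
              ∑ i, ((X i).trace).re * ((A i).trace).re / (d : ℝ)
                + ∑ j, ((Y j).trace).re * ((B j).trace).re / (d : ℝ)) ∧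
            r = 1 + ∑ i, ((X i * A i).trace).re + ∑ j, ((Y j * B j).trace).re} with hT
  have h0S : (0 : ℝ) ∈ S := by
    refine ⟨le_rfl, zero_le_one, fun i j => (((A i).trace / (d : ℂ)) * ((B j).trace / (d : ℂ))) • 1,
      fun i j => Matrix.PosSemidef.one.smul (mul_nonneg (hnn _ (hA i)) (hnn _ (hB j))), ?_, ?_⟩
    · intro i
      rw [← Finset.sum_smul, ← Finset.mul_sum, htr B hBsum]
      simp
    · intro j
      rw [← Finset.sum_smul, ← Finset.sum_mul, htr A hAsum]
      simp
  have h1T : (1 : ℝ) ∈ T := by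
    refine ⟨0, 0, ?_, ?_, ?_, ?_, ?_⟩ <;> simp [Matrix.PosSemidef.zero]
  have hweak : ∀ α ∈ S, ∀ r ∈ T, α ≤ r := by
    rintro α ⟨ha0, ha1, C, hC, h1, h2⟩ r ⟨X, Y, hX, hY, hXY, hge, rfl⟩
    have := aux_weak X Y A B hA hB α hXY C hC h1 h2
    nlinarith [mul_le_mul_of_nonneg_left hge (sub_nonneg.2 ha1)]
  have hSb : BddAbove S := ⟨1, fun α h => h.2.1⟩
  have hTb : BddBelow T := ⟨0, fun r hr => hweak 0 h0S r hr⟩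
  apply le_antisymm
  · exact csSup_le ⟨0, h0S⟩ fun α ha => le_csInf ⟨1, h1T⟩ fun r hr => hweak α ha r hr
  · refine le_of_forall_gt_imp_ge_of_dense fun t ht => ?_
    by_cases ht1 : 1 ≤ t
    · exact (csInf_le hTb h1T).trans ht1
    push Not at ht1
    have ht0 : 0 < t := (le_csSup hSb h0S).trans_lt ht
    have htS : t ∉ S := fun h => absurd (le_csSup hSb h) (not_le.2 ht)
    obtain ⟨X, Y, hX, hY, hXY, hlt⟩ := aux_sep
      (fun i => (t : ℂ) • A i + (((1 - t : ℝ) : ℂ) * ((A i).trace / (d : ℂ))) • 1)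
      (fun i => (t : ℂ) • B i + (((1 - t : ℝ) : ℂ) * ((B i).trace / (d : ℂ))) • 1)
      (fun i => (aux_noisy _ (hA i) t ht0.le ht1.le).1)
      (fun i => (aux_noisy _ (hB i) t ht0.le ht1.le).1)
      (by
        rintro ⟨C, hC, hCe⟩
        refine htS ⟨ht0.le, ht1.le, C, hC, fun i => ?_, fun j => ?_⟩
        · exact congrFun (congrArg Prod.fst hCe) i
        · exact congrFun (congrArg Prod.snd hCe) j)
    rw [aux_expand_sum X Y A B hA hB t] at hlt
    obtain ⟨-, -, C, hC, h1, h2⟩ := h0S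
    have hq := aux_weak X Y A B hA hB 0 hXY C hC h1 h2
    set p := ∑ i, ((X i * A i).trace).re + ∑ j, ((Y j * B j).trace).re with hp
    set q := ∑ i, ((X i).trace).re * ((A i).trace).re / (d : ℝ)
                + ∑ j, ((Y j).trace).re * ((B j).trace).re / (d : ℝ) with hqd
    have hq0 : 0 ≤ q := by linarith
    have hp0 : p < 0 := by
      by_contra h
      push Not at h
      have := mul_nonneg ht0.le h
      have := mul_nonneg (sub_nonneg.2 ht1.le) hq0
      linarith
    set s : ℝ := (1 - t) / (-p) with hs
    have hs0 : 0 ≤ s := div_nonneg (sub_nonneg.2 ht1.le) (by linarith)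
    have hsp : s * p = t - 1 := by
      rw [hs]; field_simp [hp0.ne]; ring
    have hsq : s * q ≤ t := by
      rw [hs, div_mul_eq_mul_div, div_le_iff₀ (by linarith)]
      linarith
    have e1 : ∑ i, (((s • X i) * A i).trace).re + ∑ j, (((s • Y j) * B j).trace).re = s * p := by
      simp only [hp, Matrix.smul_mul, Matrix.trace_smul, Complex.smul_re, smul_eq_mul,
        mul_add, Finset.mul_sum]
    have e2 : ∑ i, ((s • X i).trace).re * ((A i).trace).re / (d : ℝ)
                + ∑ j, ((s • Y j).trace).re * ((B j).trace).re / (d : ℝ) = s * q := by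
      simp only [hqd, Matrix.trace_smul, Complex.smul_re, smul_eq_mul,
        mul_add, Finset.mul_sum, mul_assoc, mul_div_assoc]
    refine csInf_le hTb ⟨fun i => s • X i, fun j => s • Y j, fun i => ?_, fun j => ?_,
      fun i j => ?_, ?_, ?_⟩
    · show (s • X i)ᴴ = s • X i
      rw [Matrix.conjTranspose_smul, (hX i).eq, star_trivial]
    · show (s • Y j)ᴴ = s • Y j
      rw [Matrix.conjTranspose_smul, (hY j).eq, star_trivial]
    · show (s • X i + s • Y j).PosSemidef
      rw [← smul_add]
      exact aux_smul_psd (hXY i j) hs0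
    · rw [add_assoc]
      show _ ≤ _
      rw [e1, e2, hsp]
      linarith
    · rw [add_assoc, e1, hsp]
      ring
end
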